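/- Let K be an isolated invariant continuum of a continuous flow on ℝ² with region of influence I(K) = ℝ². Then K is non-saddle, and consequently K is either a stable global attractor or a negatively stable global repeller. -/

import Mathlib

/-!
Write `A` and `R` for the sets attracted and repelled by `K`; the hypothesis is `A ∪ R = ℝ²`.
The argument uses two facts about the topology of the plane. Both are proved by following
continuous logarithms of `α t - β s` for paths `α`, `β` (`logInc`), so no form of the Jordan curve
theorem is needed.

* Crossing (`crossing`, `flow_crossing`): two orbit pieces running side by side cannot have their
  ends connected crosswise by disjoint sets that miss the segment between their midpoints.
* Two sides (`two_sides`, `two_sides_orbit`): an injective arc whose ends are joined far from its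
  middle has two points near its middle which no path off the closed-up curve connects. Otherwise
  the logarithms of `p - q` defined off the two halves of the arc would glue to one defined on a
  punctured disc.

*Attracted orbits that are not repelled come from infinity* (`escape_bot`). Otherwise such an orbit
comes close to `K` at times tending to `-∞`, and its exit points from a neighborhood of `K`
accumulate at some `y`, which is repelled by `K` and hence not on the orbit. Two passages near `y`
that are closest to each other, closed up through a neighborhood of `K` using a record approach,
contradict the crossing fact (`return_crossing`).

*No orbit outside `K` is both attracted and repelled* (`no_homoclinic`). Such an orbit, together
with `K`, cuts the component of `Kᶜ` containing it, so it has a bounded complementary component `D`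
in which all orbits are again homoclinic. Among the orbits in `D` one takes, by Zorn's lemma, one
that cuts off a minimal set; the two-sides fact gives another orbit in `D` cutting off the same set.
The boundary of that set lies on both orbits or in `K`, hence in `K`, which is absurd.

It follows that `Kᶜ` is connected (`compl_joined`), as a bounded component would consist of
homoclinic orbits. Moreover `A \ K` and `R \ K` are disjoint, and they are open (`A_open`,
`R_open`): an attracted and a repelled orbit passing close to each other could be closed up near `K`
on one side and near infinity on the other, against the crossing fact. So one of them is empty
(`dichotomy`). If `R ⊆ K` then `A = ℝ²` and `K` is stable (`stable`), since orbits that start closer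
and closer to `K` and reach a fixed distance would accumulate at a repelled point. The other case is
the time reversal, and a stable or negatively stable set is not saddle.
-/

open Set Filter Topology

variable {M : Type*}

/-- The positive semi-trajectory `γ⁺(x)`. -/
def posOrbit [TopologicalSpace M] (φ : Flow ℝ M) (x : M) : Set M :=
  {y | ∃ t : ℝ, 0 ≤ t ∧ φ t x = y}

/-- The negative semi-trajectory `γ⁻(x)`. -/
def negOrbit [TopologicalSpace M] (φ : Flow ℝ M) (x : M) : Set M :=
  {y | ∃ t : ℝ, t ≤ 0 ∧ φ t x = y}

/-- The omega-limit set `ω(x) = ⋂_{t>0} closure (x·[t,∞))`. -/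
def omegaLim [TopologicalSpace M] (φ : Flow ℝ M) (x : M) : Set M :=
  ⋂ t ∈ Set.Ioi (0:ℝ), closure {y | ∃ s : ℝ, t ≤ s ∧ φ s x = y}

/-- The negative omega-limit set `ω*(x) = ⋂_{t<0} closure (x·(-∞,t])`. -/
def alphaLim [TopologicalSpace M] (φ : Flow ℝ M) (x : M) : Set M :=
  ⋂ t ∈ Set.Iio (0:ℝ), closure {y | ∃ s : ℝ, s ≤ t ∧ φ s x = y}

/-- `K` is invariant under the flow. -/
def FlowInvariant [TopologicalSpace M] (φ : Flow ℝ M) (K : Set M) : Prop :=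
  ∀ x ∈ K, ∀ t : ℝ, φ t x ∈ K

/-- `K` is a compact invariant set which is the maximal invariant subset of some
compact neighborhood (an isolated invariant compactum). -/
def IsIsolatedInv [TopologicalSpace M] (φ : Flow ℝ M) (K : Set M) : Prop :=
  IsCompact K ∧ FlowInvariant φ K ∧
    ∃ N : Set M, IsCompact N ∧ K ⊆ interior N ∧
      ∀ x ∈ N, (∀ t : ℝ, φ t x ∈ N) → x ∈ K

/-- `K` is saddle: it admits a neighborhood `U` such that every neighborhood `V` of `K`
contains a point whose positive and negative semi-trajectories both leave `U`. -/
def Saddle [TopologicalSpace M] (φ : Flow ℝ M) (K : Set M) : Prop :=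
  ∃ U : Set M, K ⊆ interior U ∧ ∀ V : Set M, K ⊆ interior V →
    ∃ x ∈ V, ¬ posOrbit φ x ⊆ U ∧ ¬ negOrbit φ x ⊆ U

/-- `K` is non-saddle: every neighborhood `U` of `K` contains a neighborhood `V` of `K`
such that every point of `V` has `γ⁺(x) ⊆ U` or `γ⁻(x) ⊆ U`. -/
def NonSaddle [TopologicalSpace M] (φ : Flow ℝ M) (K : Set M) : Prop :=
  ∀ U : Set M, K ⊆ interior U → ∃ V : Set M, K ⊆ interior V ∧ V ⊆ U ∧
    ∀ x ∈ V, posOrbit φ x ⊆ U ∨ negOrbit φ x ⊆ U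

/-- The stable manifold (region of attraction) `A(K)`. -/
def Aset [TopologicalSpace M] (φ : Flow ℝ M) (K : Set M) : Set M :=
  {x | (omegaLim φ x).Nonempty ∧ omegaLim φ x ⊆ K}

/-- The unstable manifold (region of repulsion) `R(K)`. -/
def Rset [TopologicalSpace M] (φ : Flow ℝ M) (K : Set M) : Set M :=
  {x | (alphaLim φ x).Nonempty ∧ alphaLim φ x ⊆ K}

/-- The region of influence `I(K) = A(K) ∪ R(K)`. -/
def Iset [TopologicalSpace M] (φ : Flow ℝ M) (K : Set M) : Set M :=
  Aset φ K ∪ Rset φ K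

/-- `H(K) = A(K) ∩ R(K)`. -/
def Hset [TopologicalSpace M] (φ : Flow ℝ M) (K : Set M) : Set M :=
  Aset φ K ∩ Rset φ K

/-- The positive prolongational limit set `J⁺(x)`. -/
def Jplus [TopologicalSpace M] (φ : Flow ℝ M) (x : M) : Set M :=
  {y | ∃ (xs : ℕ → M) (ts : ℕ → ℝ), Tendsto xs atTop (𝓝 x) ∧
    Tendsto ts atTop atTop ∧ Tendsto (fun n => φ (ts n) (xs n)) atTop (𝓝 y)}

/-- The negative prolongational limit set `J⁻(x)`. -/
def Jminus [TopologicalSpace M] (φ : Flow ℝ M) (x : M) : Set M :=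
  {y | ∃ (xs : ℕ → M) (ts : ℕ → ℝ), Tendsto xs atTop (𝓝 x) ∧
    Tendsto ts atTop atBot ∧ Tendsto (fun n => φ (ts n) (xs n)) atTop (𝓝 y)}

/-- The two-sided prolongational limit set `J*(x)`. -/
def Jstar [TopologicalSpace M] (φ : Flow ℝ M) (x : M) : Set (M × M) :=
  {p | ∃ (xs : ℕ → M) (ts ss : ℕ → ℝ), Tendsto xs atTop (𝓝 x) ∧
    Tendsto ts atTop atTop ∧ Tendsto ss atTop atBot ∧
    Tendsto (fun n => φ (ts n) (xs n)) atTop (𝓝 p.1) ∧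
    Tendsto (fun n => φ (ss n) (xs n)) atTop (𝓝 p.2)}

/-- `x ∈ I(K)` is positively dissonant. -/
def PosDissonant [TopologicalSpace M] (φ : Flow ℝ M) (K : Set M) (x : M) : Prop :=
  x ∈ Iset φ K ∧ x ∉ Aset φ K ∧ (Jplus φ x ∩ K).Nonempty

/-- `x ∈ I(K)` is negatively dissonant. -/
def NegDissonant [TopologicalSpace M] (φ : Flow ℝ M) (K : Set M) (x : M) : Prop :=
  x ∈ Iset φ K ∧ x ∉ Rset φ K ∧ (Jminus φ x ∩ K).Nonempty

/-- `x ∉ I(K)` is externally dissonant. -/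
def ExtDissonant [TopologicalSpace M] (φ : Flow ℝ M) (K : Set M) (x : M) : Prop :=
  x ∉ Iset φ K ∧ (Jstar φ x ∩ K ×ˢ K).Nonempty

/-- `x` is a dissonant point of `K`. -/
def Dissonant [TopologicalSpace M] (φ : Flow ℝ M) (K : Set M) (x : M) : Prop :=
  PosDissonant φ K x ∨ NegDissonant φ K x ∨ ExtDissonant φ K x

/-- `N` is an isolating block for `K` with entrance set `Ni` and exit set `No`. -/
structure IsolatingBlock [TopologicalSpace M] (φ : Flow ℝ M) (K N Ni No : Set M) : Prop where
  compact_N : IsCompact N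
  nbhd : K ⊆ interior N
  maximal : ∀ x ∈ N, (∀ t : ℝ, φ t x ∈ N) → x ∈ K
  compact_Ni : IsCompact Ni
  compact_No : IsCompact No
  Ni_sub : Ni ⊆ frontier N
  No_sub : No ⊆ frontier N
  cover : frontier N = Ni ∪ No
  entrance : ∀ x ∈ Ni, ∃ ε > (0:ℝ), ∀ t ∈ Set.Ico (-ε) (0:ℝ), φ t x ∉ N
  exitSet : ∀ x ∈ No, ∃ δ > (0:ℝ), ∀ t ∈ Set.Ioc (0:ℝ) δ, φ t x ∉ N
  tang_neg : ∀ x ∈ frontier N \ Ni, ∃ ε > (0:ℝ), ∀ t ∈ Set.Ico (-ε) (0:ℝ), φ t x ∈ interior N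
  tang_pos : ∀ x ∈ frontier N \ No, ∃ δ > (0:ℝ), ∀ t ∈ Set.Ioc (0:ℝ) δ, φ t x ∈ interior N

/-- `p` is strongly influenced by `K`. -/
def StronglyInfluenced [TopologicalSpace M] (φ : Flow ℝ M) (K : Set M) (p : M) : Prop :=
  ∃ U ∈ 𝓝 p, ∀ V : Set M, K ⊆ interior V → ∃ T : ℝ, 0 ≤ T ∧ ∀ x ∈ U,
    (∀ t : ℝ, T ≤ t → φ t x ∈ V) ∨ (∀ t : ℝ, t ≤ -T → φ t x ∈ V)

/-- `p` is strongly attracted by `K`. -/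
def StronglyAttracted [TopologicalSpace M] (φ : Flow ℝ M) (K : Set M) (p : M) : Prop :=
  ∃ U ∈ 𝓝 p, ∀ V : Set M, K ⊆ interior V → ∃ T : ℝ, 0 ≤ T ∧ ∀ x ∈ U,
    ∀ t : ℝ, T ≤ t → φ t x ∈ V

/-- `p` is strongly repelled by `K`. -/
def StronglyRepelled [TopologicalSpace M] (φ : Flow ℝ M) (K : Set M) (p : M) : Prop :=
  ∃ U ∈ 𝓝 p, ∀ V : Set M, K ⊆ interior V → ∃ T : ℝ, 0 ≤ T ∧ ∀ x ∈ U,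
    ∀ t : ℝ, t ≤ -T → φ t x ∈ V

/-- `K` is (positively) stable. -/
def IsStable [TopologicalSpace M] (φ : Flow ℝ M) (K : Set M) : Prop :=
  ∀ U : Set M, K ⊆ interior U → ∃ V : Set M, K ⊆ interior V ∧ V ⊆ U ∧
    ∀ x ∈ V, ∀ t : ℝ, 0 ≤ t → φ t x ∈ V

/-- `K` is negatively stable. -/
def IsNegStable [TopologicalSpace M] (φ : Flow ℝ M) (K : Set M) : Prop :=
  ∀ U : Set M, K ⊆ interior U → ∃ V : Set M, K ⊆ interior V ∧ V ⊆ U ∧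
    ∀ x ∈ V, ∀ t : ℝ, t ≤ 0 → φ t x ∈ V

/-- `K` is an attractor: stable and attracting some neighborhood. -/
def IsAttractor [TopologicalSpace M] (φ : Flow ℝ M) (K : Set M) : Prop :=
  IsStable φ K ∧ ∃ W : Set M, K ⊆ interior W ∧ W ⊆ Aset φ K

/-- `K` is a repeller: negatively stable and repelling some neighborhood. -/
def IsRepeller [TopologicalSpace M] (φ : Flow ℝ M) (K : Set M) : Prop :=
  IsNegStable φ K ∧ ∃ W : Set M, K ⊆ interior W ∧ W ⊆ Rset φ K


/-! ### Logarithmic change of a nonvanishing path -/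

/-- `c` is the total change of a continuous logarithm of `f` along `[0, 1]`. -/
def HasDlog (f : ℝ → ℂ) (c : ℂ) : Prop :=
  ∃ L : ℝ → ℂ, ContinuousOn L (Icc 0 1) ∧ (∀ t ∈ Icc (0:ℝ) 1, Complex.exp (L t) = f t) ∧
    L 1 - L 0 = c

/-- Two continuous logarithms of the same function on a connected set differ by a constant. -/
theorem log_diff_const {X : Type*} [TopologicalSpace X] {s : Set X} (hs : IsPreconnected s)
    {L L' : X → ℂ} (hL : ContinuousOn L s) (hL' : ContinuousOn L' s)
    (h : ∀ t ∈ s, Complex.exp (L t) = Complex.exp (L' t)) {x y : X} (hx : x ∈ s) (hy : y ∈ s) :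
    L x - L' x = L y - L' y := by
  have key : ∀ t ∈ s, ∃ n : ℤ, ((L t - L' t) / (2 * Real.pi * Complex.I)).re = n ∧
      L t = L' t + n * (2 * Real.pi * Complex.I) := by
    intro t ht
    obtain ⟨n, hn⟩ := Complex.exp_eq_exp_iff_exists_int.1 (h t ht)
    refine ⟨n, ?_, hn⟩
    have h0 : (2 * Real.pi * Complex.I : ℂ) ≠ 0 := Complex.two_pi_I_ne_zero
    rw [hn, add_sub_cancel_left, mul_div_assoc, div_self h0]
    simp
  have hc : ContinuousOn (fun t => round ((L t - L' t) / (2 * Real.pi * Complex.I)).re) s := by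
    have hc1 : ContinuousOn (fun t => ((L t - L' t) / (2 * Real.pi * Complex.I)).re) s :=
      Complex.continuous_re.comp_continuousOn ((hL.sub hL').div_const _)
    have hemb : Topology.IsClosedEmbedding ((↑) : ℤ → ℝ) := Int.isClosedEmbedding_coe_real
    rw [hemb.isEmbedding.continuousOn_iff]
    refine hc1.congr fun t ht => ?_
    obtain ⟨n, hn, -⟩ := key t ht
    simp [Function.comp, hn]
  have hxy := hs.constant hc hx hy
  obtain ⟨n, hn, hn'⟩ := key x hx
  obtain ⟨m, hm, hm'⟩ := key y hy
  simp only [hn, hm, round_intCast] at hxy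
  rw [hn', hm', hxy]; ring

theorem HasDlog.unique {f : ℝ → ℂ} {c c' : ℂ} (h : HasDlog f c) (h' : HasDlog f c') : c = c' := by
  obtain ⟨L, hL, he, rfl⟩ := h
  obtain ⟨L', hL', he', rfl⟩ := h'
  have := log_diff_const isPreconnected_Icc hL hL' (fun t ht => (he t ht).trans (he' t ht).symm)
    (left_mem_Icc.2 zero_le_one) (right_mem_Icc.2 (zero_le_one (α := ℝ)))
  linear_combination -this

/-- A nonvanishing function on the unit square has a continuous logarithm there. -/
theorem rect_log {F : ℝ × ℝ → ℂ} (hF : Continuous F)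
    (h0 : ∀ s ∈ Icc (0:ℝ) 1, ∀ t ∈ Icc (0:ℝ) 1, F (s, t) ≠ 0) :
    ∃ Λ : ℝ × ℝ → ℂ, Continuous Λ ∧
      ∀ s ∈ Icc (0:ℝ) 1, ∀ t ∈ Icc (0:ℝ) 1, Complex.exp (Λ (s, t)) = F (s, t) := by
  let cl : ℝ → ℝ := fun t => projIcc (0:ℝ) 1 zero_le_one t
  have hcl : Continuous cl := continuous_subtype_val.comp continuous_projIcc
  have hmem : ∀ t, cl t ∈ Icc (0:ℝ) 1 := fun t => (projIcc (0:ℝ) 1 zero_le_one t).2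
  have hid : ∀ t ∈ Icc (0:ℝ) 1, cl t = t := fun t ht => by
    simp only [cl]; rw [projIcc_of_mem _ ht]
  let G : C(ℝ × ℝ, ℂ) := ⟨fun z => F (cl z.1, cl z.2), by fun_prop⟩
  have hG : ∀ a, G a ∈ ({0}ᶜ : Set ℂ) := fun a => h0 _ (hmem _) _ (hmem _)
  obtain ⟨Λ, ⟨-, hΛ⟩, -⟩ := Complex.isCoveringMapOn_exp.existsUnique_continuousMap_lifts G
    (e₀ := Complex.log (G (0, 0))) (a₀ := (0, 0)) (Complex.exp_log (hG _)) hG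
  refine ⟨Λ, Λ.continuous, fun s hs t ht => ?_⟩
  have := congrFun hΛ (s, t)
  simp only [Function.comp, G, ContinuousMap.coe_mk, hid s hs, hid t ht] at this
  exact this

open Classical in
/-- The change of a continuous logarithm of `f` along `[0, 1]` (`0` if there is none). -/
noncomputable def dlog (f : ℝ → ℂ) : ℂ := if h : ∃ c, HasDlog f c then h.choose else 0

theorem HasDlog.dlog_eq {f : ℝ → ℂ} {c : ℂ} (h : HasDlog f c) : dlog f = c := by
  have h' : ∃ c, HasDlog f c := ⟨c, h⟩
  rw [dlog, dif_pos h']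
  exact h'.choose_spec.unique h

theorem hasDlog_dlog {f : ℝ → ℂ} (hf : Continuous f) (h0 : ∀ t ∈ Icc (0:ℝ) 1, f t ≠ 0) :
    HasDlog f (dlog f) := by
  obtain ⟨Λ, hΛ, he⟩ := rect_log (F := fun z => f z.2) (by fun_prop) (fun s _ t ht => h0 t ht)
  have h : HasDlog f (Λ (0, 1) - Λ (0, 0)) :=
    ⟨fun t => Λ (0, t), by fun_prop, fun t ht => he 0 (by simp) t ht, rfl⟩
  rwa [h.dlog_eq]

theorem HasDlog.exp_eq {f : ℝ → ℂ} {c : ℂ} (h : HasDlog f c) : Complex.exp c = f 1 / f 0 := by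
  obtain ⟨L, -, he, rfl⟩ := h
  rw [Complex.exp_sub, he 1 (by simp), he 0 (by simp)]

theorem HasDlog.neg {f : ℝ → ℂ} {c : ℂ} (h : HasDlog f c) : HasDlog (fun t => - f t) c := by
  obtain ⟨L, hL, he, rfl⟩ := h
  refine ⟨fun t => L t + Real.pi * Complex.I, by fun_prop, fun t ht => ?_, by ring⟩
  rw [Complex.exp_add, he t ht, Complex.exp_pi_mul_I]; ring

theorem HasDlog.of_slit {f : ℝ → ℂ} (hf : Continuous f) (h0 : f 0 ≠ 0)
    (h : ∀ t ∈ Icc (0:ℝ) 1, f t / f 0 ∈ Complex.slitPlane) :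
    HasDlog f (Complex.log (f 1 / f 0)) := by
  refine ⟨fun t => Complex.log (f t / f 0) + Complex.log (f 0), ?_, fun t ht => ?_, ?_⟩
  · exact ContinuousOn.add (ContinuousOn.clog (by fun_prop) h) continuousOn_const
  · rw [Complex.exp_add, Complex.exp_log (Complex.slitPlane_ne_zero (h t ht)), Complex.exp_log h0,
      div_mul_cancel₀ _ h0]
  · simp [div_self h0]

/-- Going around the boundary of the square, the logarithmic change vanishes. -/
theorem dlog_rect {F : ℝ × ℝ → ℂ} (hF : Continuous F)
    (h0 : ∀ s ∈ Icc (0:ℝ) 1, ∀ t ∈ Icc (0:ℝ) 1, F (s, t) ≠ 0) :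
    dlog (fun t => F (0, t)) + dlog (fun s => F (s, 1)) =
      dlog (fun s => F (s, 0)) + dlog (fun t => F (1, t)) := by
  obtain ⟨Λ, hΛ, he⟩ := rect_log hF h0
  have hz : (0:ℝ) ∈ Icc (0:ℝ) 1 := by simp
  have ho : (1:ℝ) ∈ Icc (0:ℝ) 1 := by simp
  have v : ∀ s ∈ Icc (0:ℝ) 1, dlog (fun t => F (s, t)) = Λ (s, 1) - Λ (s, 0) := fun s hs =>
    HasDlog.dlog_eq ⟨fun t => Λ (s, t), by fun_prop, fun t ht => he s hs t ht, rfl⟩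
  have w : ∀ t ∈ Icc (0:ℝ) 1, dlog (fun s => F (s, t)) = Λ (1, t) - Λ (0, t) := fun t ht =>
    HasDlog.dlog_eq ⟨fun s => Λ (s, t), by fun_prop, fun s hs => he s hs t ht, rfl⟩
  rw [v 0 hz, v 1 ho, w 0 hz, w 1 ho]; ring

/-- The change of `log (· - z)` along the path `α`. -/
noncomputable def logInc (α : ℝ → ℂ) (z : ℂ) : ℂ := dlog (fun t => α t - z)

theorem exp_logInc {α : ℝ → ℂ} {z : ℂ} (hα : Continuous α) (h : ∀ t ∈ Icc (0:ℝ) 1, α t ≠ z) :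
    Complex.exp (logInc α z) = (α 1 - z) / (α 0 - z) :=
  (hasDlog_dlog (f := fun t => α t - z) (by fun_prop) fun t ht => sub_ne_zero.2 (h t ht)).exp_eq

theorem dlog_neg {f : ℝ → ℂ} (hf : Continuous f) (h0 : ∀ t ∈ Icc (0:ℝ) 1, f t ≠ 0) :
    dlog (fun t => - f t) = dlog f := (hasDlog_dlog hf h0).neg.dlog_eq

/-- Reciprocity for two disjoint paths. -/
theorem logInc_rect {α β : ℝ → ℂ} (hα : Continuous α) (hβ : Continuous β)
    (h : ∀ s ∈ Icc (0:ℝ) 1, ∀ t ∈ Icc (0:ℝ) 1, α s ≠ β t) :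
    logInc α (β 1) - logInc α (β 0) = logInc β (α 1) - logInc β (α 0) := by
  have hz : (0:ℝ) ∈ Icc (0:ℝ) 1 := by simp
  have ho : (1:ℝ) ∈ Icc (0:ℝ) 1 := by simp
  have := dlog_rect (F := fun z => α z.1 - β z.2) (by fun_prop)
    (fun s hs t ht => sub_ne_zero.2 (h s hs t ht))
  have e0 : dlog (fun t => α 0 - β t) = logInc β (α 0) := by
    rw [logInc, ← dlog_neg (by fun_prop) fun t ht => sub_ne_zero.2 (h 0 hz t ht).symm]
    simp only [neg_sub]
  have e1 : dlog (fun t => α 1 - β t) = logInc β (α 1) := by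
    rw [logInc, ← dlog_neg (by fun_prop) fun t ht => sub_ne_zero.2 (h 1 ho t ht).symm]
    simp only [neg_sub]
  simp only [e0, e1] at this
  simp only [logInc] at this ⊢
  linear_combination this

/-- Two paths whose four endpoints are joined by homotopy edges: the square formula for
`logInc · z` when the homotopy avoids `z`. -/
theorem logInc_homotopy {H : ℝ × ℝ → ℂ} {z : ℂ} (hH : Continuous H)
    (h : ∀ s ∈ Icc (0:ℝ) 1, ∀ t ∈ Icc (0:ℝ) 1, H (s, t) ≠ z) :
    logInc (fun t => H (0, t)) z + logInc (fun s => H (s, 1)) z =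
      logInc (fun s => H (s, 0)) z + logInc (fun t => H (1, t)) z :=
  dlog_rect (F := fun w => H w - z) (by fun_prop) fun s hs t ht => sub_ne_zero.2 (h s hs t ht)


/-! ### The crossing lemma -/

/-- The affine segment from `a` to `b`. -/
noncomputable def sg (a b : ℂ) (t : ℝ) : ℂ := a + t * (b - a)

@[simp] theorem sg_zero (a b : ℂ) : sg a b 0 = a := by simp [sg]
@[simp] theorem sg_one (a b : ℂ) : sg a b 1 = b := by simp [sg]

theorem continuous_sg (a b : ℂ) : Continuous (sg a b) := by unfold sg; fun_prop

theorem norm_sg_sub_right {a b : ℂ} {t : ℝ} (ht : t ∈ Icc (0:ℝ) 1) : ‖b - sg a b t‖ ≤ ‖b - a‖ := by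
  have : b - sg a b t = ((1 - t : ℝ) : ℂ) * (b - a) := by simp [sg]; ring
  rw [this, norm_mul, Complex.norm_real, Real.norm_of_nonneg (by linarith [ht.2])]
  nlinarith [ht.1, norm_nonneg (b - a)]

theorem norm_sg_sub_left {a b : ℂ} {t : ℝ} (ht : t ∈ Icc (0:ℝ) 1) : ‖sg a b t - a‖ ≤ ‖b - a‖ := by
  have : sg a b t - a = (t : ℂ) * (b - a) := by simp [sg]
  rw [this, norm_mul, Complex.norm_real, Real.norm_of_nonneg ht.1]
  nlinarith [ht.2, norm_nonneg (b - a)]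

/-- A segment that is short compared with its distance from `z` has the principal increment. -/
theorem logInc_sg {a b z : ℂ} (h : 2 * ‖b - a‖ ≤ ‖a - z‖) (hz : a ≠ z) :
    logInc (sg a b) z = Complex.log (1 + (b - a) / (a - z)) ∧
      ‖logInc (sg a b) z‖ ≤ 3 / 2 * (‖b - a‖ / ‖a - z‖) := by
  have h0 : a - z ≠ 0 := sub_ne_zero.2 hz
  have hp : 0 < ‖a - z‖ := norm_pos_iff.2 h0
  have hw : ‖(b - a) / (a - z)‖ ≤ 1 / 2 := by
    rw [norm_div, div_le_iff₀ hp]; linarith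
  have hs : ∀ t : ℝ, (sg a b t - z) / (sg a b 0 - z) = 1 + t * ((b - a) / (a - z)) := by
    intro t; rw [sg_zero, sg]; field_simp; ring
  have hl : HasDlog (fun t => sg a b t - z) _ :=
    HasDlog.of_slit (f := fun t => sg a b t - z) ((continuous_sg a b).sub continuous_const)
      (by simpa using h0) (fun t ht => by
        rw [hs t]
        left
        have h1 : |((t : ℂ) * ((b - a) / (a - z))).re| ≤ 1 / 2 := by
          refine (Complex.abs_re_le_norm _).trans ?_
          rw [norm_mul, Complex.norm_real, Real.norm_of_nonneg ht.1]
          nlinarith [ht.1, ht.2, norm_nonneg ((b - a) / (a - z))]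
        rw [Complex.add_re, Complex.one_re]
        linarith [(abs_le.1 h1).1])
  have he : logInc (sg a b) z = Complex.log (1 + (b - a) / (a - z)) := by
    rw [logInc, hl.dlog_eq, hs]; simp
  refine ⟨he, ?_⟩
  rw [he, ← norm_div]
  exact Complex.norm_log_one_add_half_le_self hw

/-- Two paths `ξ`, `η` over `[-1, 1]` running side by side cannot be closed up crosswise: there
are no disjoint connections `cr` from `ξ 1` to `η (-1)` and `dr` from `η 1` to `ξ (-1)` that do
not cross the strip between them in its middle. -/
theorem crossing {ξ η cr dr : ℝ → ℂ} (hξ : Continuous ξ) (hη : Continuous η)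
    (hcr : Continuous cr) (hdr : Continuous dr) {ε : ℝ} (hε : 0 < ε)
    (hdis : ∀ a ∈ Icc (-1:ℝ) 1, ∀ b ∈ Icc (-1:ℝ) 1, ξ a ≠ η b)
    (hclose : ∀ a ∈ Icc (-1:ℝ) 1, ‖ξ a - η a‖ ≤ ε)
    (hfar1 : ∀ a ∈ Icc (-1:ℝ) 0, 8 * ε ≤ ‖ξ a - ξ 1‖)
    (hfar2 : ∀ a ∈ Icc (0:ℝ) 1, 8 * ε ≤ ‖ξ a - ξ (-1)‖)
    (cr0 : cr 0 = ξ 1) (cr1 : cr 1 = η (-1)) (dr0 : dr 0 = η 1) (dr1 : dr 1 = ξ (-1))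
    (hcd : ∀ s ∈ Icc (0:ℝ) 1, ∀ t ∈ Icc (0:ℝ) 1, cr s ≠ dr t)
    (hcξ : ∀ s ∈ Icc (0:ℝ) 1, ∀ a ∈ Icc (-1:ℝ) 0, cr s ≠ ξ a)
    (hcη : ∀ s ∈ Icc (0:ℝ) 1, ∀ a ∈ Icc (0:ℝ) 1, cr s ≠ η a)
    (hch : ∀ s ∈ Icc (0:ℝ) 1, ∀ t ∈ Icc (0:ℝ) 1, cr s ≠ sg (η 0) (ξ 0) t)
    (hdη : ∀ s ∈ Icc (0:ℝ) 1, ∀ a ∈ Icc (-1:ℝ) 0, dr s ≠ η a)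
    (hdξ : ∀ s ∈ Icc (0:ℝ) 1, ∀ a ∈ Icc (0:ℝ) 1, dr s ≠ ξ a)
    (hdh : ∀ s ∈ Icc (0:ℝ) 1, ∀ t ∈ Icc (0:ℝ) 1, dr s ≠ sg (η 0) (ξ 0) t) : False := by
  set ξm : ℝ → ℂ := fun t => ξ (t - 1) with hξm
  set ηm : ℝ → ℂ := fun t => η (t - 1) with hηm
  have cξm : Continuous ξm := by fun_prop
  have cηm : Continuous ηm := by fun_prop
  have mI : ∀ t ∈ Icc (0:ℝ) 1, t - 1 ∈ Icc (-1:ℝ) 0 := fun t ht =>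
    ⟨by linarith [ht.1], by linarith [ht.2]⟩
  have mI' : ∀ t ∈ Icc (-1:ℝ) 0, t ∈ Icc (-1:ℝ) 1 := fun t ht => ⟨ht.1, by linarith [ht.2]⟩
  have pI' : ∀ t ∈ Icc (0:ℝ) 1, t ∈ Icc (-1:ℝ) 1 := fun t ht => ⟨by linarith [ht.1], ht.2⟩
  have o1 : (1:ℝ) ∈ Icc (-1:ℝ) 1 := by constructor <;> norm_num
  have n1 : (-1:ℝ) ∈ Icc (-1:ℝ) 1 := by constructor <;> norm_num
  set h := sg (η 0) (ξ 0) with hh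
  have ch : Continuous h := continuous_sg _ _
  set hm := sg (η (-1)) (ξ (-1)) with hhm
  set hp := sg (η 1) (ξ 1) with hhp
  have ξm0 : ξm 0 = ξ (-1) := by simp [hξm]
  have ξm1 : ξm 1 = ξ 0 := by simp [hξm]
  have ηm0 : ηm 0 = η (-1) := by simp [hηm]
  have ηm1 : ηm 1 = η 0 := by simp [hηm]
  have h0 : h 0 = η 0 := by simp [hh]
  have h1 : h 1 = ξ 0 := by simp [hh]
  -- `dr` against the loop `ηm`, `h`, `ξ`, `cr`
  have A1 := logInc_rect hdr cηm fun s hs t ht => hdη s hs _ (mI t ht)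
  have A2 := logInc_rect hdr ch fun s hs t ht => hdh s hs t ht
  have A3 := logInc_rect hdr hξ fun s hs t ht => hdξ s hs t ht
  have A4 := logInc_rect hdr hcr fun s hs t ht => (hcd t ht s hs).symm
  -- `cr` against `ξm`, the reverse of `h`, and `η`
  have B1 := logInc_rect hcr cξm fun s hs t ht => hcξ s hs _ (mI t ht)
  have B2 := logInc_rect hcr ch fun s hs t ht => hch s hs t ht
  have B3 := logInc_rect hcr hη fun s hs t ht => hcη s hs t ht
  -- `ξ` against `η`
  have C1 := logInc_rect cξm cηm fun s hs t ht => hdis _ (mI' _ (mI s hs)) _ (mI' _ (mI t ht))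
  have C2 := logInc_rect cξm hη fun s hs t ht => hdis _ (mI' _ (mI s hs)) _ (pI' _ ht)
  have C3 := logInc_rect hξ cηm fun s hs t ht => hdis _ (pI' _ hs) _ (mI' _ (mI t ht))
  have C4 := logInc_rect hξ hη fun s hs t ht => hdis _ (pI' _ hs) _ (pI' _ ht)
  -- the straight-line homotopies between the two sides of the strip
  have hav : ∀ (a z w : ℂ) (b : ℂ) (s : ℝ), s ∈ Icc (0:ℝ) 1 → 8 * ε ≤ ‖a - w‖ → ‖a - b‖ ≤ ε →
      ‖z - w‖ ≤ ε → sg b a s ≠ z := by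
    intro a z w b s hs haw hab hzw he
    have e1 := norm_sg_sub_right (a := b) (b := a) hs
    rw [he] at e1
    have := norm_sub_le_norm_sub_add_norm_sub a z w
    linarith
  have Dm : ∀ z, ‖z - ξ 1‖ ≤ ε →
      logInc ηm z + logInc h z = logInc hm z + logInc ξm z := by
    intro z hz
    have := logInc_homotopy (H := fun w => sg (η (w.2 - 1)) (ξ (w.2 - 1)) w.1) (z := z)
      (by unfold sg; fun_prop) (fun s hs t ht => hav _ _ _ _ _ hs (hfar1 _ (mI t ht))
        (hclose _ (mI' _ (mI t ht))) hz)
    simpa only [sg_zero, sg_one, sub_self, zero_sub] using this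
  have Dp : ∀ z, ‖z - ξ (-1)‖ ≤ ε →
      logInc η z + logInc hp z = logInc h z + logInc ξ z := by
    intro z hz
    have := logInc_homotopy (H := fun w => sg (η w.2) (ξ w.2) w.1) (z := z)
      (by unfold sg; fun_prop) (fun s hs t ht => hav _ _ _ _ _ hs (hfar2 _ ht)
        (hclose _ (pI' _ ht)) hz)
    simpa only [sg_zero, sg_one] using this
  have c1 : ‖η 1 - ξ 1‖ ≤ ε := by rw [norm_sub_rev]; exact hclose 1 o1
  have cn1 : ‖η (-1) - ξ (-1)‖ ≤ ε := by rw [norm_sub_rev]; exact hclose _ n1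
  have D1 := Dm (η 1) c1
  have D2 := Dm (ξ 1) (by simpa using hε.le)
  have D3 := Dp (η (-1)) cn1
  have D4 := Dp (ξ (-1)) (by simpa using hε.le)
  simp only [ξm0, ξm1, ηm0, ηm1, h0, h1, cr0, cr1, dr0, dr1] at A1 A2 A3 A4 B1 B2 B3 C1 C2 C3 C4
  have f8 : 8 * ε ≤ ‖ξ (-1) - ξ 1‖ := hfar1 _ (by constructor <;> norm_num)
  -- the four short segments contribute little
  have small : ∀ (a b z a' z' : ℂ), ‖b - a‖ ≤ ε → 8 * ε ≤ ‖a' - z'‖ → ‖a - a'‖ ≤ ε →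
      ‖z - z'‖ ≤ ε → ‖logInc (sg a b) z‖ ≤ 1 / 4 := by
    intro a b z a' z' hab haz ha hz
    have t1 := norm_sub_le_norm_sub_add_norm_sub a' a z'
    have t2 := norm_sub_le_norm_sub_add_norm_sub a z z'
    rw [norm_sub_rev a' a] at t1
    have h6 : 6 * ε ≤ ‖a - z‖ := by linarith
    have hne : a ≠ z := by rintro rfl; simp at h6; linarith
    refine (logInc_sg (by linarith) hne).2.trans ?_
    rw [← mul_div_assoc, div_le_iff₀ (by linarith)]; linarith
  have s1 : ‖logInc hm (η 1)‖ ≤ 1 / 4 :=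
    small _ _ _ _ _ (hclose _ n1) f8 cn1 c1
  have s2 : ‖logInc hm (ξ 1)‖ ≤ 1 / 4 :=
    small _ _ _ _ _ (hclose _ n1) f8 cn1 (by simpa using hε.le)
  have f8' : 8 * ε ≤ ‖ξ 1 - ξ (-1)‖ := by rw [norm_sub_rev]; exact f8
  have s3 : ‖logInc hp (ξ (-1))‖ ≤ 1 / 4 :=
    small _ _ _ _ _ (hclose _ o1) f8' c1 (by simpa using hε.le)
  have s4 : ‖logInc hp (η (-1))‖ ≤ 1 / 4 :=
    small _ _ _ _ _ (hclose _ o1) f8' c1 cn1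
  set sm := logInc hm (η 1) + logInc hm (ξ 1) - logInc hp (ξ (-1)) - logInc hp (η (-1)) with hsm
  have hsmn : ‖sm‖ ≤ 1 := by
    have := norm_sub_le (logInc hm (η 1) + logInc hm (ξ 1) - logInc hp (ξ (-1)))
      (logInc hp (η (-1)))
    have := norm_sub_le (logInc hm (η 1) + logInc hm (ξ 1)) (logInc hp (ξ (-1)))
    have := norm_add_le (logInc hm (η 1)) (logInc hm (ξ 1))
    linarith
  have main : (logInc ξm (η (-1)) + logInc ξ (η (-1))) - (logInc ηm (ξ (-1)) + logInc η (ξ (-1)))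
      = - sm / 2 := by
    rw [hsm]
    linear_combination (1/2 : ℂ) * (A1 + A2 + A3 + A4 - (B1 - B2 + B3) - (C1 + C2 + C3 + C4)
      - (D1 + D2 + D3 + D4))
  have E1 := exp_logInc cξm (z := η (-1)) fun t ht => hdis _ (mI' _ (mI t ht)) _ n1
  have E2 := exp_logInc hξ (z := η (-1)) fun t ht => hdis _ (pI' _ ht) _ n1
  have E3 := exp_logInc cηm (z := ξ (-1)) fun t ht => (hdis _ n1 _ (mI' _ (mI t ht))).symm
  have E4 := exp_logInc hη (z := ξ (-1)) fun t ht => (hdis _ n1 _ (pI' _ ht)).symm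
  rw [ξm0, ξm1] at E1
  rw [ηm0, ηm1] at E3
  have zI : (0:ℝ) ∈ Icc (-1:ℝ) 1 := by constructor <;> norm_num
  have ne1 := sub_ne_zero.2 (hdis 0 zI _ n1)
  have ne2 := sub_ne_zero.2 (hdis _ n1 _ n1)
  have ne3 := sub_ne_zero.2 (hdis _ n1 0 zI).symm
  have ne4 := sub_ne_zero.2 (hdis _ n1 _ n1).symm
  have ne5 := sub_ne_zero.2 (hdis _ n1 _ o1).symm
  have hexp : Complex.exp (- sm / 2) = -1 + ((η (-1) - ξ (-1)) + (η 1 - ξ 1)) / (η 1 - ξ (-1)) := by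
    rw [← main, Complex.exp_sub, Complex.exp_add, Complex.exp_add, E1, E2, E3, E4]
    have e : ξ (-1) - η (-1) = -(η (-1) - ξ (-1)) := by ring
    rw [e]
    field_simp
    ring
  have hre1 : 0 < (Complex.exp (- sm / 2)).re := by
    rw [Complex.exp_re]
    refine mul_pos (Real.exp_pos _) (Real.cos_pos_of_mem_Ioo ?_)
    have : |(- sm / 2).im| ≤ 1 / 2 := by
      refine (Complex.abs_im_le_norm _).trans ?_
      rw [norm_div, norm_neg]; norm_num; linarith
    rw [abs_le] at this
    constructor <;> linarith [this.1, this.2, Real.pi_gt_three]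
  rw [hexp] at hre1
  have h7 : 7 * ε ≤ ‖η 1 - ξ (-1)‖ := by
    have := norm_sub_le_norm_sub_add_norm_sub (ξ 1) (η 1) (ξ (-1))
    linarith [hclose 1 o1]
  have : (((η (-1) - ξ (-1)) + (η 1 - ξ 1)) / (η 1 - ξ (-1))).re ≤ 2 / 7 := by
    refine (Complex.re_le_norm _).trans ?_
    rw [norm_div, div_le_iff₀ (by linarith)]
    have := norm_add_le (η (-1) - ξ (-1)) (η 1 - ξ 1)
    linarith
  rw [Complex.add_re, Complex.neg_re, Complex.one_re] at hre1
  linarith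


/-- The identification of `ℝ × ℝ` with `ℂ`. -/
noncomputable abbrev toC : (ℝ × ℝ) ≃L[ℝ] ℂ := Complex.equivRealProdCLM.symm

theorem toC_segment (u v : ℝ × ℝ) {t : ℝ} (ht : t ∈ Icc (0:ℝ) 1) :
    ∃ w ∈ segment ℝ u v, sg (toC v) (toC u) t = toC w := by
  refine ⟨v + t • (u - v), ?_, ?_⟩
  · rw [segment_symm, segment_eq_image']
    exact ⟨t, ht, rfl⟩
  · rw [map_add, map_smul, map_sub, sg, Complex.real_smul]

theorem JoinedIn.exists_fun {S : Set (ℝ × ℝ)} {u v : ℝ × ℝ} (h : JoinedIn S u v) :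
    ∃ c : ℝ → ℝ × ℝ, Continuous c ∧ c 0 = u ∧ c 1 = v ∧ ∀ t ∈ Icc (0:ℝ) 1, c t ∈ S := by
  refine ⟨h.somePath.extend, h.somePath.continuous_extend, by simp, by simp, fun t ht => ?_⟩
  rw [Path.extend_apply _ ht]
  exact h.somePath_mem _

/-- Crossing lemma for flows: near a nonperiodic point, two orbit pieces cannot be connected
crosswise by disjoint sets `Sc`, `Sd`. -/
theorem flow_crossing (φ : Flow ℝ (ℝ × ℝ)) {x : ℝ × ℝ} (hx : ∀ s t, φ s x = φ t x → s = t) :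
    ∃ O : Set (ℝ × ℝ), IsOpen O ∧ x ∈ O ∧ ∀ u ∈ O, ∀ v ∈ O, ∀ Sc Sd : Set (ℝ × ℝ),
      JoinedIn Sc (φ 1 u) (φ (-1) v) → JoinedIn Sd (φ 1 v) (φ (-1) u) → Disjoint Sc Sd →
      (∀ a ∈ Icc (-1:ℝ) 1, ∀ b ∈ Icc (-1:ℝ) 1, φ a u ≠ φ b v) →
      (∀ a ∈ Icc (-1:ℝ) 0, φ a u ∉ Sc) → (∀ a ∈ Icc (0:ℝ) 1, φ a v ∉ Sc) →
      Disjoint (segment ℝ u v) Sc →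
      (∀ a ∈ Icc (-1:ℝ) 0, φ a v ∉ Sd) → (∀ a ∈ Icc (0:ℝ) 1, φ a u ∉ Sd) →
      Disjoint (segment ℝ u v) Sd → False := by
  have hsep : ∀ (b : ℝ) (I : Set ℝ), IsCompact I → b ∉ I →
      ∃ m > 0, ∀ a ∈ I, m ≤ ‖toC (φ a x) - toC (φ b x)‖ := by
    intro b I hI hb
    rcases I.eq_empty_or_nonempty with rfl | hne
    · exact ⟨1, one_pos, by simp⟩
    have hc : Continuous fun a => ‖toC (φ a x) - toC (φ b x)‖ :=
      ((toC.continuous.comp (φ.continuous continuous_id continuous_const)).sub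
        continuous_const).norm
    obtain ⟨a, ha, hmin⟩ := hI.exists_isMinOn hne hc.continuousOn
    refine ⟨_, norm_pos_iff.2 (sub_ne_zero.2 fun h => ?_), hmin⟩
    exact hb (hx _ _ (toC.injective h) ▸ ha)
  obtain ⟨m1, hm1, h1⟩ := hsep 1 (Icc (-1) 0) isCompact_Icc (by simp)
  obtain ⟨m2, hm2, h2⟩ := hsep (-1) (Icc 0 1) isCompact_Icc (by simp)
  set ε := min m1 m2 / 9 with hε
  have hε0 : 0 < ε := by positivity
  have e1 : 9 * ε ≤ m1 := by rw [hε]; linarith [min_le_left m1 m2]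
  have e2 : 9 * ε ≤ m2 := by rw [hε]; linarith [min_le_right m1 m2]
  have hev : ∀ᶠ u in 𝓝 x, ∀ a ∈ Icc (-1:ℝ) 1, ‖toC (φ a u) - toC (φ a x)‖ < ε / 2 := by
    refine isCompact_Icc.eventually_forall_of_forall_eventually fun a _ => ?_
    have hc : Continuous fun z : (ℝ × ℝ) × ℝ => ‖toC (φ z.2 z.1) - toC (φ z.2 x)‖ :=
      ((toC.continuous.comp (φ.continuous continuous_snd continuous_fst)).sub
        (toC.continuous.comp (φ.continuous continuous_snd continuous_const))).norm
    exact hc.continuousAt.eventually_lt continuousAt_const (by simp [hε0])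
  obtain ⟨O, hO, hOo, hxO⟩ := eventually_nhds_iff.1 hev
  refine ⟨O, hOo, hxO, ?_⟩
  intro u hu v hv Sc Sd jc jd hdis huv huc hvc hsc hvd hud hsd
  obtain ⟨c, cc, c0, c1, cm⟩ := JoinedIn.exists_fun jc
  obtain ⟨d, cd, d0, d1, dm⟩ := JoinedIn.exists_fun jd
  have hn : ∀ w ∈ O, ∀ a ∈ Icc (-1:ℝ) 1, ‖toC (φ a w) - toC (φ a x)‖ < ε / 2 := hO
  have far : ∀ m, 9 * ε ≤ m → ∀ a ∈ Icc (-1:ℝ) 1, ∀ b ∈ Icc (-1:ℝ) 1,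
      m ≤ ‖toC (φ a x) - toC (φ b x)‖ → 8 * ε ≤ ‖toC (φ a u) - toC (φ b u)‖ := by
    intro m hm a ha b hb h
    have t1 := norm_sub_le_norm_sub_add_norm_sub (toC (φ a x)) (toC (φ a u)) (toC (φ b x))
    have t2 := norm_sub_le_norm_sub_add_norm_sub (toC (φ a u)) (toC (φ b u)) (toC (φ b x))
    have t3 := hn u hu a ha
    have t4 := hn u hu b hb
    rw [norm_sub_rev] at t3
    linarith
  have cu : Continuous fun t => toC (φ t u) :=
    toC.continuous.comp (φ.continuous continuous_id continuous_const)
  have cv : Continuous fun t => toC (φ t v) :=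
    toC.continuous.comp (φ.continuous continuous_id continuous_const)
  refine crossing cu cv (toC.continuous.comp cc) (toC.continuous.comp cd) hε0 ?_ ?_ ?_ ?_
    (by simp [c0]) (by simp [c1]) (by simp [d0]) (by simp [d1]) ?_ ?_ ?_ ?_ ?_ ?_ ?_
  · exact fun a ha b hb h => huv a ha b hb (toC.injective h)
  · intro a ha
    have t1 := norm_sub_le_norm_sub_add_norm_sub (toC (φ a u)) (toC (φ a x)) (toC (φ a v))
    have t2 := hn u hu a ha
    have t3 := hn v hv a ha
    rw [norm_sub_rev] at t3
    linarith
  · exact fun a ha => far _ e1 a ⟨ha.1, by linarith [ha.2]⟩ 1 (by constructor <;> norm_num) (h1 a ha)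
  · exact fun a ha => far _ e2 a ⟨by linarith [ha.1], ha.2⟩ (-1) (by constructor <;> norm_num)
      (h2 a ha)
  · exact fun s hs t ht h => disjoint_left.1 hdis (cm s hs) ((toC.injective h) ▸ dm t ht)
  · exact fun s hs a ha h => huc a ha ((toC.injective h) ▸ cm s hs)
  · exact fun s hs a ha h => hvc a ha ((toC.injective h) ▸ cm s hs)
  · intro s hs t ht h
    simp only [φ.map_zero_apply] at h
    obtain ⟨w, hw, e⟩ := toC_segment u v ht
    rw [e] at h
    exact disjoint_left.1 hsc hw ((toC.injective h) ▸ cm s hs)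
  · exact fun s hs a ha h => hvd a ha ((toC.injective h) ▸ dm s hs)
  · exact fun s hs a ha h => hud a ha ((toC.injective h) ▸ dm s hs)
  · intro s hs t ht h
    simp only [φ.map_zero_apply] at h
    obtain ⟨w, hw, e⟩ := toC_segment u v ht
    rw [e] at h
    exact disjoint_left.1 hsd hw ((toC.injective h) ▸ dm s hs)


/-! ### The two sides of an arc -/

theorem no_log_punctured {p : ℂ} {r : ℝ} (hr : 0 < r) {Λ : ℂ → ℂ}
    (hΛ : ContinuousOn Λ (Metric.ball p r \ {p}))
    (he : ∀ q ∈ Metric.ball p r \ {p}, Complex.exp (Λ q) = p - q) : False := by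
  set q : ℝ → ℂ := fun θ => p - (r / 2 : ℝ) * Complex.exp (θ * Complex.I) with hq
  have hr2 : ((r / 2 : ℝ) : ℂ) ≠ 0 := by exact_mod_cast (half_pos hr).ne'
  have hmem : ∀ θ, q θ ∈ Metric.ball p r \ {p} := by
    intro θ
    constructor
    · rw [Metric.mem_ball, dist_eq_norm, hq]
      simp only [sub_sub_cancel_left, norm_neg, norm_mul, Complex.norm_exp_ofReal_mul_I,
        Complex.norm_real, mul_one, Real.norm_of_nonneg (half_pos hr).le]
      linarith
    · simp only [hq, mem_singleton_iff, sub_eq_self]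
      exact mul_ne_zero hr2 (Complex.exp_ne_zero _)
  have hc : Continuous q := by fun_prop
  have h1 : Continuous fun θ => Λ (q θ) := hΛ.comp_continuous hc hmem
  have h2 : Continuous fun θ : ℝ => Complex.log (r / 2 : ℝ) + θ * Complex.I := by fun_prop
  have := log_diff_const isPreconnected_univ h1.continuousOn h2.continuousOn (fun θ _ => by
    rw [he _ (hmem θ), Complex.exp_add, Complex.exp_log hr2, hq]; simp)
    (mem_univ 0) (mem_univ (2 * Real.pi))
  have hqq : q (2 * Real.pi) = q 0 := by
    simp only [hq]; push_cast; rw [Complex.exp_two_pi_mul_I]; simp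
  simp only [hqq] at this
  have h3 : (2 * Real.pi * Complex.I : ℂ) = 0 := by
    push_cast at this
    linear_combination this
  exact Complex.two_pi_I_ne_zero h3

/-- `z ↦ logInc γ z` is continuous off the path. -/
theorem continuousAt_logInc {γ : ℝ → ℂ} (hγ : Continuous γ) {q₀ : ℂ}
    (h : ∀ t ∈ Icc (0:ℝ) 1, γ t ≠ q₀) : ContinuousAt (logInc γ) q₀ := by
  have hcl : IsClosed (γ '' Icc 0 1) := (isCompact_Icc.image hγ).isClosed
  have hq : q₀ ∈ (γ '' Icc 0 1)ᶜ := by rintro ⟨t, ht, e⟩; exact h t ht e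
  obtain ⟨δ, hδ, hball⟩ := Metric.isOpen_iff.1 hcl.isOpen_compl _ hq
  have hne : ∀ t ∈ Icc (0:ℝ) 1, δ ≤ ‖q₀ - γ t‖ := by
    intro t ht
    by_contra hlt
    rw [not_le, norm_sub_rev, ← dist_eq_norm] at hlt
    exact hball (Metric.mem_ball.2 hlt) ⟨t, ht, rfl⟩
  have zI : (0:ℝ) ∈ Icc (0:ℝ) 1 := by simp
  have oI : (1:ℝ) ∈ Icc (0:ℝ) 1 := by simp
  have key : ∀ q ∈ Metric.ball q₀ (δ / 2), logInc γ q₀ +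
      (Complex.log (1 + (q - q₀) / (q₀ - γ 1)) - Complex.log (1 + (q - q₀) / (q₀ - γ 0))) =
        logInc γ q := by
    intro q hqm
    rw [Metric.mem_ball, dist_eq_norm] at hqm
    have hr := logInc_rect hγ (continuous_sg q₀ q) (fun s hs t ht e => by
      have := norm_sg_sub_left (a := q₀) (b := q) ht
      rw [← e, norm_sub_rev] at this
      linarith [hne s hs])
    rw [sg_zero, sg_one] at hr
    rw [← (logInc_sg (a := q₀) (b := q) (z := γ 1) (by linarith [hne 1 oI]) (h 1 oI).symm).1,
      ← (logInc_sg (a := q₀) (b := q) (z := γ 0) (by linarith [hne 0 zI]) (h 0 zI).symm).1]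
    linear_combination -hr
  refine ContinuousAt.congr ?_ (Filter.eventually_of_mem (Metric.ball_mem_nhds q₀ (half_pos hδ)) key)
  have hl : ∀ z : ℂ, ContinuousAt (fun q => Complex.log (1 + (q - q₀) / (q₀ - z))) q₀ := by
    intro z
    refine ContinuousAt.clog (by fun_prop) ?_
    simp
  exact continuousAt_const.add ((hl _).sub (hl _))

/-- On a disc not containing `w`, the increment of `log (· - w)` along a chord is the difference
of the values of one continuous logarithm of `w - ·`. -/
theorem exists_log_ball {p w : ℂ} {r : ℝ} (hw : w ∉ Metric.ball p r) (hr : 0 < r) :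
    ∃ l : ℂ → ℂ, ContinuousOn l (Metric.ball p r) ∧
      (∀ q ∈ Metric.ball p r, Complex.exp (l q) = w - q) ∧
      ∀ q ∈ Metric.ball p r, ∀ q' ∈ Metric.ball p r, logInc (sg q q') w = l q' - l q := by
  have hw' : r ≤ ‖w - p‖ := by rwa [Metric.mem_ball, dist_eq_norm, not_lt] at hw
  have h0 : w - p ≠ 0 := norm_pos_iff.1 (by linarith)
  have hs : ∀ q ∈ Metric.ball p r, (w - q) / (w - p) ∈ Complex.slitPlane := by
    intro q hq
    left
    have e : (w - q) / (w - p) = 1 - (q - p) / (w - p) := by field_simp; ring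
    rw [e, Complex.sub_re, Complex.one_re]
    have : ((q - p) / (w - p)).re < 1 := by
      refine (Complex.re_le_norm _).trans_lt ?_
      rw [norm_div, div_lt_one (by linarith)]
      rw [Metric.mem_ball, dist_eq_norm] at hq
      linarith
    linarith
  refine ⟨fun q => Complex.log ((w - q) / (w - p)) + Complex.log (w - p), ?_, ?_, ?_⟩
  · exact ContinuousOn.add (ContinuousOn.clog (by fun_prop) hs) continuousOn_const
  · intro q hq
    rw [Complex.exp_add, Complex.exp_log (Complex.slitPlane_ne_zero (hs q hq)), Complex.exp_log h0,
      div_mul_cancel₀ _ h0]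
  · intro q hq q' hq'
    have hsg : ∀ t ∈ Icc (0:ℝ) 1, sg q q' t ∈ Metric.ball p r := by
      intro t ht
      refine (convex_ball p r).segment_subset hq hq' ?_
      rw [segment_eq_image']
      exact ⟨t, ht, by simp [sg, Complex.real_smul]⟩
    have : HasDlog (fun t => w - sg q q' t) (Complex.log ((w - q') / (w - p)) +
        Complex.log (w - p) - (Complex.log ((w - q) / (w - p)) + Complex.log (w - p))) := by
      refine ⟨fun t => Complex.log ((w - sg q q' t) / (w - p)) + Complex.log (w - p), ?_, ?_, ?_⟩
      · refine ContinuousOn.add (ContinuousOn.clog ?_ fun t ht => hs _ (hsg t ht)) continuousOn_const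
        exact ((continuous_const.sub (continuous_sg q q')).div_const _).continuousOn
      · intro t ht
        rw [Complex.exp_add, Complex.exp_log (Complex.slitPlane_ne_zero (hs _ (hsg t ht))),
          Complex.exp_log h0, div_mul_cancel₀ _ h0]
      · simp
    have := this.neg
    simp only [neg_sub] at this
    exact this.dlog_eq

/-- An arc `γ` crossing a disc about `γ 0` from outside to outside has points `q`, `q'` of the
disc on its two sides: a path from `q` to `q'` cannot avoid both `γ` and a path closing `γ` up
outside the disc. -/
theorem two_sides {γ : ℝ → ℂ} (hγ : Continuous γ) (hinj : InjOn γ (Icc (-1) 1)) {r : ℝ}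
    (hr : 0 < r) (h1 : γ 1 ∉ Metric.ball (γ 0) r) (hn1 : γ (-1) ∉ Metric.ball (γ 0) r) :
    ∃ q ∈ Metric.ball (γ 0) r, ∃ q' ∈ Metric.ball (γ 0) r, q ∉ γ '' Icc (-1) 1 ∧
      q' ∉ γ '' Icc (-1) 1 ∧ ∀ ret β : ℝ → ℂ, Continuous ret → Continuous β →
        ret 0 = γ 1 → ret 1 = γ (-1) → β 0 = q → β 1 = q' →
        (∀ t ∈ Icc (0:ℝ) 1, ret t ∉ Metric.ball (γ 0) r) →
        (∀ s ∈ Icc (0:ℝ) 1, ∀ t ∈ Icc (0:ℝ) 1, β s ≠ ret t) →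
        (∀ s ∈ Icc (0:ℝ) 1, β s ∉ γ '' Icc (-1) 1) → False := by
  set γm : ℝ → ℂ := fun t => γ (t - 1) with hγm
  have cγm : Continuous γm := by fun_prop
  have m0 : γm 0 = γ (-1) := by simp [hγm]
  have m1 : γm 1 = γ 0 := by simp [hγm]
  set p := γ 0 with hp
  have mI : ∀ t ∈ Icc (0:ℝ) 1, t - 1 ∈ Icc (-1:ℝ) 1 := fun t ht =>
    ⟨by linarith [ht.1], by linarith [ht.2]⟩
  have pI : ∀ t ∈ Icc (0:ℝ) 1, t ∈ Icc (-1:ℝ) 1 := fun t ht => ⟨by linarith [ht.1], ht.2⟩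
  have hsg : ∀ q ∈ Metric.ball p r, ∀ q' ∈ Metric.ball p r, ∀ t ∈ Icc (0:ℝ) 1,
      sg q q' t ∈ Metric.ball p r := by
    intro q hq q' hq' t ht
    refine (convex_ball p r).segment_subset hq hq' ?_
    rw [segment_eq_image']
    exact ⟨t, ht, by simp [sg, Complex.real_smul]⟩
  by_contra hcon
  push Not at hcon
  obtain ⟨lP, clP, elP, ilP⟩ := exists_log_ball h1 hr
  obtain ⟨lM, clM, elM, ilM⟩ := exists_log_ball hn1 hr
  -- otherwise the two local logarithms of `p - q` differ by a constant
  have hN : ∀ q ∈ Metric.ball p r, ∀ q' ∈ Metric.ball p r, q ∉ γ '' Icc (-1) 1 →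
      q' ∉ γ '' Icc (-1) 1 →
      (lM q' + logInc γm q') - (lP q' - logInc γ q') =
        (lM q + logInc γm q) - (lP q - logInc γ q) := by
    intro q hq q' hq' hqγ hq'γ
    obtain ⟨ret, β, cr, cb, r0, r1, b0, b1, rb, bret, bγ, -⟩ := hcon q hq q' hq' hqγ hq'γ
    have A1 := logInc_rect cb cγm fun s hs t ht e => bγ s hs ⟨_, mI t ht, e.symm⟩
    have A2 := logInc_rect cb hγ fun s hs t ht e => bγ s hs ⟨_, pI t ht, e.symm⟩
    have A3 := logInc_rect cb cr bret
    have A4 := logInc_rect (continuous_sg q q') cr fun s hs t ht e =>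
      rb t ht (e ▸ hsg q hq q' hq' s hs)
    simp only [m0, m1, r0, r1, b0, b1, sg_zero, sg_one, ← hp] at A1 A2 A3 A4
    have i1 := ilP q hq q' hq'
    have i2 := ilM q hq q' hq'
    linear_combination - A1 - A2 - A3 + A4 + i1 - i2
  have hclm : IsClosed (γm '' Icc 0 1) := (isCompact_Icc.image cγm).isClosed
  have hclp : IsClosed (γ '' Icc 0 1) := (isCompact_Icc.image hγ).isClosed
  set U₁ := Metric.ball p r ∩ (γm '' Icc 0 1)ᶜ with hU₁
  set U₂ := Metric.ball p r ∩ (γ '' Icc 0 1)ᶜ with hU₂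
  have oU₁ : IsOpen U₁ := Metric.isOpen_ball.inter hclm.isOpen_compl
  have oU₂ : IsOpen U₂ := Metric.isOpen_ball.inter hclp.isOpen_compl
  have hboth : ∀ q ∈ U₁, q ∈ U₂ → q ∉ γ '' Icc (-1) 1 := by
    rintro q ⟨-, h1⟩ ⟨-, h2⟩ ⟨t, ht, e⟩
    rcases le_total 0 t with h | h
    · exact h2 ⟨t, ⟨h, ht.2⟩, e⟩
    · exact h1 ⟨t + 1, ⟨by linarith [ht.1], by linarith⟩, by simpa [hγm] using e⟩
  set a : ℂ → ℂ := fun q => lM q + logInc γm q with ha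
  set b : ℂ → ℂ := fun q => lP q - logInc γ q with hb
  have ca : ContinuousOn a U₁ := by
    intro q hq
    refine ContinuousWithinAt.add ((clM q hq.1).mono inter_subset_left) ?_
    exact (continuousAt_logInc cγm fun t ht e => hq.2 ⟨t, ht, e⟩).continuousWithinAt
  have cb : ContinuousOn b U₂ := by
    intro q hq
    refine ContinuousWithinAt.sub ((clP q hq.1).mono inter_subset_left) ?_
    exact (continuousAt_logInc hγ fun t ht e => hq.2 ⟨t, ht, e⟩).continuousWithinAt
  have ea : ∀ q ∈ U₁, Complex.exp (a q) = p - q := by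
    intro q hq
    have hne : ∀ t ∈ Icc (0:ℝ) 1, γm t ≠ q := fun t ht e => hq.2 ⟨t, ht, e⟩
    have h0 := sub_ne_zero.2 (hne 0 (by simp))
    simp only [ha]
    rw [Complex.exp_add, elM q hq.1, exp_logInc cγm hne, m1]
    rw [m0] at h0 ⊢
    field_simp
  have eb : ∀ q ∈ U₂, Complex.exp (b q) = p - q := by
    intro q hq
    have hne : ∀ t ∈ Icc (0:ℝ) 1, γ t ≠ q := fun t ht e => hq.2 ⟨t, ht, e⟩
    have h0 := sub_ne_zero.2 (hne 0 (by simp))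
    have h1 := sub_ne_zero.2 (hne 1 (by simp))
    simp only [hb]
    rw [Complex.exp_sub, elP q hq.1, exp_logInc hγ hne]
    field_simp
    rfl
  obtain ⟨C, hC1, hC⟩ : ∃ C : ℂ, Complex.exp C = 1 ∧ ∀ q ∈ U₁, q ∈ U₂ → a q = b q + C := by
    by_cases hex : ∃ q₀ ∈ U₁, q₀ ∈ U₂
    · obtain ⟨q₀, hq₁, hq₂⟩ := hex
      refine ⟨a q₀ - b q₀, ?_, fun q hq hq' => ?_⟩
      · rw [Complex.exp_sub, ea _ hq₁, eb _ hq₂, div_self]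
        rw [← ea _ hq₁]; exact Complex.exp_ne_zero _
      · have := hN q₀ hq₁.1 q hq.1 (hboth _ hq₁ hq₂) (hboth _ hq hq')
        linear_combination this
    · exact ⟨0, by simp, fun q hq hq' => (hex ⟨q, hq, hq'⟩).elim⟩
  have hcover : ∀ q ∈ Metric.ball p r \ {p}, q ∈ U₁ ∨ q ∈ U₂ := by
    rintro q ⟨hq, hqp⟩
    by_contra hno
    push Not at hno
    have n1 : q ∈ γm '' Icc 0 1 := by_contra fun h => hno.1 ⟨hq, h⟩
    have n2 : q ∈ γ '' Icc 0 1 := by_contra fun h => hno.2 ⟨hq, h⟩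
    obtain ⟨t, ht, e⟩ := n1
    obtain ⟨s, hs, e'⟩ := n2
    have hts : t - 1 = s := hinj (mI t ht) (pI s hs) (e.trans e'.symm)
    have : s = 0 := by linarith [hs.1, ht.2]
    rw [this] at e'
    exact hqp e'.symm
  classical
  -- the two local logarithms glue to a logarithm of `p - q` on the punctured disc
  refine no_log_punctured (p := p) hr (Λ := fun q => if q ∈ U₁ then a q else b q + C) ?_ ?_
  · intro q hq
    refine ContinuousAt.continuousWithinAt ?_
    rcases hcover q hq with h | h
    · refine (ca.continuousAt (oU₁.mem_nhds h)).congr ?_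
      filter_upwards [oU₁.mem_nhds h] with w hw
      rw [if_pos hw]
    · refine ((cb.continuousAt (oU₂.mem_nhds h)).add (continuousAt_const (y := C))).congr ?_
      filter_upwards [oU₂.mem_nhds h] with w hw
      split_ifs with h1
      · exact (hC w h1 hw).symm
      · rfl
  · intro q hq
    split_ifs with h1
    · exact ea q h1
    · rw [Complex.exp_add, hC1, mul_one, eb q ((hcover q hq).resolve_left h1)]


/-! ### Dynamics near an isolated continuum with global influence -/

/-- The standing hypotheses on `K`, with the isolating neighborhood taken to be a closed
`δ`-neighborhood of `K`. -/
structure Glob (φ : Flow ℝ (ℝ × ℝ)) (K : Set (ℝ × ℝ)) : Prop where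
  cpt : IsCompact K
  inv : FlowInvariant φ K
  conn : IsConnected K
  glob : ∀ x, x ∈ Aset φ K ∨ x ∈ Rset φ K
  iso : ∃ δ > 0, ∀ x, (∀ t, Metric.infDist (φ t x) K ≤ δ) → x ∈ K

theorem mem_omegaLim_iff {φ : Flow ℝ (ℝ × ℝ)} {x y : ℝ × ℝ} :
    y ∈ omegaLim φ x ↔ MapClusterPt y atTop (fun t => φ t x) := by
  rw [mapClusterPt_iff_frequently]
  simp only [omegaLim, mem_iInter, mem_closure_iff_nhds, frequently_atTop]
  constructor
  · intro h U hU a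
    obtain ⟨z, hz, s, hs, rfl⟩ := h (max a 1) (by simp) U hU
    exact ⟨s, (le_max_left _ _).trans hs, hz⟩
  · intro h a _ U hU
    obtain ⟨b, hb, hbU⟩ := h U hU a
    exact ⟨_, hbU, b, hb, rfl⟩

theorem omegaLim_reverse (φ : Flow ℝ (ℝ × ℝ)) (x : ℝ × ℝ) :
    omegaLim φ.reverse x = alphaLim φ x := by
  ext y
  simp only [omegaLim, alphaLim, mem_iInter]
  constructor
  · intro h t ht
    have := h (-t) (by simpa using ht)
    refine closure_mono ?_ this
    rintro z ⟨s, hs, rfl⟩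
    exact ⟨-s, by linarith, rfl⟩
  · intro h t ht
    have := h (-t) (by simpa using ht)
    refine closure_mono ?_ this
    rintro z ⟨s, hs, rfl⟩
    exact ⟨-s, by linarith, by simp [Flow.reverse_apply]⟩

theorem Aset_reverse (φ : Flow ℝ (ℝ × ℝ)) (K : Set (ℝ × ℝ)) :
    Aset φ.reverse K = Rset φ K := by
  ext x; simp only [Aset, Rset, omegaLim_reverse]

theorem Rset_reverse (φ : Flow ℝ (ℝ × ℝ)) (K : Set (ℝ × ℝ)) :
    Rset φ.reverse K = Aset φ K := by
  have : φ.reverse.reverse = φ := Flow.ext fun t x => by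
    rw [Flow.reverse_apply, Flow.reverse_apply, neg_neg]
  rw [← Aset_reverse, this]

theorem flow_cont (φ : Flow ℝ (ℝ × ℝ)) (x : ℝ × ℝ) : Continuous fun t => φ t x :=
  φ.continuous continuous_id continuous_const

theorem flow_cont' (φ : Flow ℝ (ℝ × ℝ)) (t : ℝ) : Continuous fun x => φ t x :=
  φ.continuous continuous_const continuous_id

theorem flow_neg (φ : Flow ℝ (ℝ × ℝ)) (t : ℝ) (x : ℝ × ℝ) : φ (-t) (φ t x) = x := by
  rw [← φ.map_add]; simp

theorem flow_neg' (φ : Flow ℝ (ℝ × ℝ)) (t : ℝ) (x : ℝ × ℝ) : φ t (φ (-t) x) = x := by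
  rw [← φ.map_add]; simp

/-- A first time at which a continuous function reaches the level `δ`. -/
theorem first_exit {f : ℝ → ℝ} (hf : Continuous f) {a b δ : ℝ} (hab : a ≤ b) (ha : f a ≤ δ)
    (hb : δ ≤ f b) : ∃ s ∈ Icc a b, f s = δ ∧ ∀ r ∈ Icc a s, f r ≤ δ := by
  have hc : IsCompact (Icc a b ∩ f ⁻¹' {δ}) :=
    isCompact_Icc.inter_right (isClosed_singleton.preimage hf)
  have hne : (Icc a b ∩ f ⁻¹' {δ}).Nonempty := by
    obtain ⟨s, hs, e⟩ := intermediate_value_Icc hab hf.continuousOn ⟨ha, hb⟩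
    exact ⟨s, hs, e⟩
  obtain ⟨s, ⟨hs, hsδ⟩, hmin⟩ := hc.exists_isLeast hne
  refine ⟨s, hs, hsδ, fun r hr => ?_⟩
  by_contra hlt
  push Not at hlt
  obtain ⟨r', hr', e⟩ := intermediate_value_Icc hr.1 hf.continuousOn ⟨ha, hlt.le⟩
  have h1 : s ≤ r' := hmin ⟨⟨hr'.1, hr'.2.trans (hr.2.trans hs.2)⟩, e⟩
  have h2 : r = s := le_antisymm hr.2 (h1.trans hr'.2)
  rw [h2] at hlt
  exact hlt.ne' hsδ

namespace Glob

variable {φ : Flow ℝ (ℝ × ℝ)} {K : Set (ℝ × ℝ)}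

theorem reverse (h : Glob φ K) : Glob φ.reverse K where
  cpt := h.cpt
  inv := fun x hx t => h.inv x hx (-t)
  conn := h.conn
  glob := fun x => by rw [Aset_reverse, Rset_reverse]; exact (h.glob x).symm
  iso := by
    obtain ⟨δ, hδ, hi⟩ := h.iso
    refine ⟨δ, hδ, fun x hx => hi x fun t => ?_⟩
    simpa [Flow.reverse_apply] using hx (-t)

theorem dist_pos (h : Glob φ K) {x : ℝ × ℝ} (hx : x ∉ K) : 0 < Metric.infDist x K :=
  (h.cpt.isClosed.notMem_iff_infDist_pos h.conn.nonempty).1 hx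

theorem dist_zero (h : Glob φ K) {x : ℝ × ℝ} : Metric.infDist x K = 0 ↔ x ∈ K :=
  (h.cpt.isClosed.mem_iff_infDist_zero h.conn.nonempty).symm

theorem cont_dist (x : ℝ × ℝ) : Continuous fun t => Metric.infDist (φ t x) K :=
  (Metric.continuous_infDist_pt K).comp (flow_cont φ x)

theorem cont_dist' (t : ℝ) : Continuous fun x => Metric.infDist (φ t x) K :=
  (Metric.continuous_infDist_pt K).comp (flow_cont' φ t)

theorem cpt_nhd (h : Glob φ K) (δ : ℝ) : IsCompact {z | Metric.infDist z K ≤ δ} := by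
  rcases lt_or_ge δ 0 with hd | hd
  · convert isCompact_empty
    ext z
    simp only [mem_ofPred_eq, mem_empty_iff_false, iff_false, not_le]
    exact hd.trans_le Metric.infDist_nonneg
  · have := h.cpt.cthickening (r := δ)
    have e : {z | Metric.infDist z K ≤ δ} = Metric.cthickening δ K := by
      ext z
      rw [mem_ofPred_eq, Metric.cthickening_eq_preimage_infEDist, mem_preimage, mem_Iic, Metric.infDist,
        ENNReal.le_ofReal_iff_toReal_le (Metric.infEDist_ne_top h.conn.nonempty) hd]
    rwa [e]

theorem exists_nhd (h : Glob φ K) {U : Set (ℝ × ℝ)} (hU : IsOpen U) (hK : K ⊆ U) :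
    ∃ δ > 0, ∀ z, Metric.infDist z K < δ → z ∈ U := by
  obtain ⟨δ, hδ, hs⟩ := h.cpt.exists_thickening_subset_open hU hK
  exact ⟨δ, hδ, fun z hz => hs
    ((Metric.mem_thickening_iff_infDist_lt h.conn.nonempty).2 hz)⟩

/-- Points close to `K` stay close to `K` for a given finite time. -/
theorem unif (h : Glob φ K) (T : ℝ) {ε : ℝ} (hε : 0 < ε) :
    ∃ η > 0, ∀ z, Metric.infDist z K < η → ∀ s ∈ Icc (-T) T, Metric.infDist (φ s z) K < ε := by
  have hev : ∀ k ∈ K, ∀ᶠ z in 𝓝 k, ∀ s ∈ Icc (-T) T, Metric.infDist (φ s z) K < ε := by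
    intro k hk
    refine isCompact_Icc.eventually_forall_of_forall_eventually fun s _ => ?_
    have hc : Continuous fun w : (ℝ × ℝ) × ℝ => Metric.infDist (φ w.2 w.1) K :=
      (Metric.continuous_infDist_pt K).comp (φ.continuous continuous_snd continuous_fst)
    refine hc.continuousAt.eventually_lt continuousAt_const ?_
    rw [h.dist_zero.2 (h.inv k hk s)]; exact hε
  obtain ⟨δ, hδ, hs⟩ := h.exists_nhd (U := interior {z | ∀ s ∈ Icc (-T) T,
    Metric.infDist (φ s z) K < ε}) isOpen_interior fun k hk => mem_interior_iff_mem_nhds.2 (hev k hk)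
  exact ⟨δ, hδ, fun z hz => interior_subset (hs z hz)⟩

theorem mem_A_iff (h : Glob φ K) {x : ℝ × ℝ} :
    x ∈ Aset φ K ↔ Tendsto (fun t => Metric.infDist (φ t x) K) atTop (𝓝 0) := by
  constructor
  · rintro ⟨⟨y, hy⟩, hsub⟩
    rw [tendsto_order]
    refine ⟨fun a ha => Eventually.of_forall fun t => ha.trans_le Metric.infDist_nonneg, ?_⟩
    intro ε hε
    by_contra hno
    have hfr : ∃ᶠ t in atTop, ε ≤ Metric.infDist (φ t x) K := by
      simpa only [not_eventually, not_lt] using hno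
    have hyK := hsub hy
    rw [mem_omegaLim_iff, mapClusterPt_iff_frequently] at hy
    have hfr2 : ∃ᶠ t in atTop, Metric.infDist (φ t x) K < ε := by
      refine hy {z | Metric.infDist z K < ε} ((Metric.continuous_infDist_pt K).continuousAt.eventually_lt
        continuousAt_const ?_)
      rw [h.dist_zero.2 hyK]; exact hε
    have hfr3 : ∃ᶠ t in atTop, φ t x ∈ {z | Metric.infDist z K = ε} := by
      rw [frequently_atTop] at hfr hfr2 ⊢
      intro a
      obtain ⟨b, hb, hbε⟩ := hfr2 a
      obtain ⟨c, hc, hcε⟩ := hfr b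
      obtain ⟨s, hs, e, -⟩ := first_exit (cont_dist x) hc hbε.le hcε
      exact ⟨s, hb.trans hs.1, e⟩
    have hcpt : IsCompact {z | Metric.infDist z K = ε} :=
      (h.cpt_nhd ε).of_isClosed_subset
        (isClosed_eq (Metric.continuous_infDist_pt K) continuous_const) fun z hz => le_of_eq hz
    obtain ⟨z, hz, hzc⟩ := hcpt.exists_mapClusterPt_of_frequently hfr3
    have := h.dist_zero.2 (hsub (mem_omegaLim_iff.2 hzc))
    rw [mem_ofPred_eq] at hz
    linarith
  · intro ht
    constructor
    · have : ∃ᶠ t in atTop, φ t x ∈ {z | Metric.infDist z K ≤ 1} :=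
        ((ht.eventually_lt_const one_pos).mono fun t ht => le_of_lt ht).frequently
      obtain ⟨z, -, hz⟩ := (h.cpt_nhd 1).exists_mapClusterPt_of_frequently this
      exact ⟨z, mem_omegaLim_iff.2 hz⟩
    · intro y hy
      rw [mem_omegaLim_iff] at hy
      by_contra hyK
      have hp := h.dist_pos hyK
      rw [mapClusterPt_iff_frequently] at hy
      have h1 := hy {w | Metric.infDist y K / 2 < Metric.infDist w K}
        (continuousAt_const.eventually_lt (Metric.continuous_infDist_pt K).continuousAt
          (half_lt_self hp))
      obtain ⟨t, ht, ht2⟩ := (h1.and_eventually (ht.eventually_lt_const (half_pos hp))).exists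
      exact lt_asymm ht ht2

theorem mem_R_iff (h : Glob φ K) {x : ℝ × ℝ} :
    x ∈ Rset φ K ↔ Tendsto (fun t => Metric.infDist (φ t x) K) atBot (𝓝 0) := by
  rw [← Aset_reverse, h.reverse.mem_A_iff]
  constructor
  · intro ht
    have := ht.comp tendsto_neg_atBot_atTop
    refine this.congr fun t => ?_
    simp [Flow.reverse_apply]
  · intro ht
    exact ht.comp tendsto_neg_atTop_atBot

theorem A_inv (h : Glob φ K) {x : ℝ × ℝ} (s : ℝ) (hx : x ∈ Aset φ K) : φ s x ∈ Aset φ K := by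
  rw [h.mem_A_iff] at hx ⊢
  refine (hx.comp (tendsto_atTop_add_const_right _ s tendsto_id)).congr fun t => ?_
  simp [φ.map_add]

theorem R_inv (h : Glob φ K) {x : ℝ × ℝ} (s : ℝ) (hx : x ∈ Rset φ K) : φ s x ∈ Rset φ K := by
  rw [← Aset_reverse] at hx ⊢
  simpa [Flow.reverse_apply] using h.reverse.A_inv (-s) hx

theorem K_sub_A (h : Glob φ K) {x : ℝ × ℝ} (hx : x ∈ K) : x ∈ Aset φ K := by
  rw [h.mem_A_iff]
  refine tendsto_const_nhds.congr fun t => (h.dist_zero.2 (h.inv x hx t)).symm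

theorem notK_inv (h : Glob φ K) {x : ℝ × ℝ} (t : ℝ) (hx : x ∉ K) : φ t x ∉ K := fun hk =>
  hx (by simpa [flow_neg] using h.inv _ hk (-t))

/-- Orbits outside `K` are injective. -/
theorem inj (h : Glob φ K) {x : ℝ × ℝ} (hx : x ∉ K) : ∀ s t, φ s x = φ t x → s = t := by
  have key : ∀ {ψ : Flow ℝ (ℝ × ℝ)}, Glob ψ K → x ∈ Aset ψ K → ∀ s t, s < t →
      ψ s x ≠ ψ t x := by
    intro ψ hψ hA s t hst e
    have hτ : ψ (t - s) x = x := by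
      rw [sub_eq_neg_add, ψ.map_add, ← e, flow_neg]
    have hn : ∀ n : ℕ, ψ (n * (t - s)) x = x := by
      intro n
      induction n with
      | zero => simp
      | succ n ih => push_cast; rw [add_mul, one_mul, ψ.map_add, hτ, ih]
    have h1 : Tendsto (fun n : ℕ => (n : ℝ) * (t - s)) atTop atTop :=
      tendsto_natCast_atTop_atTop.atTop_mul_const (sub_pos.2 hst)
    have h2 := ((hψ.mem_A_iff.1 hA).comp h1).congr fun n => by
      simp only [Function.comp]; rw [hn n]
    exact (hψ.dist_pos hx).ne (tendsto_nhds_unique h2 tendsto_const_nhds)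
  intro s t e
  rcases h.glob x with hA | hR
  · rcases lt_trichotomy s t with hl | he | hl
    · exact (key h hA s t hl e).elim
    · exact he
    · exact (key h hA t s hl e.symm).elim
  · have hA : x ∈ Aset φ.reverse K := by rwa [Aset_reverse]
    rcases lt_trichotomy s t with hl | he | hl
    · exact (key h.reverse hA (-t) (-s) (by linarith) (by simpa [Flow.reverse_apply] using e.symm)).elim
    · exact he
    · exact (key h.reverse hA (-s) (-t) (by linarith) (by simpa [Flow.reverse_apply] using e)).elim

/-- A backward orbit that stays in the isolating neighborhood tends to `K`. -/
theorem mem_R_of_stay (h : Glob φ K) {δ : ℝ}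
    (hδ : ∀ x, (∀ t, Metric.infDist (φ t x) K ≤ δ) → x ∈ K) {y : ℝ × ℝ}
    (hy : ∀ r ≤ 0, Metric.infDist (φ r y) K ≤ δ) : y ∈ Rset φ K := by
  rw [h.mem_R_iff, tendsto_order]
  refine ⟨fun a ha => Eventually.of_forall fun t => ha.trans_le Metric.infDist_nonneg, ?_⟩
  intro ε hε
  by_contra hno
  have hfr : ∃ᶠ t in atBot, ε ≤ Metric.infDist (φ t y) K := by
    simpa only [not_eventually, not_lt] using hno
  have hfr2 : ∃ᶠ t in atBot, φ t y ∈ {z | Metric.infDist z K ≤ δ} ∩ {z | ε ≤ Metric.infDist z K} :=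
    (hfr.and_eventually (eventually_le_atBot 0)).mono fun t ht => ⟨hy t ht.2, ht.1⟩
  have hc := (h.cpt_nhd δ).inter_right
    (isClosed_le continuous_const (Metric.continuous_infDist_pt K) :
      IsClosed {z | ε ≤ Metric.infDist z K})
  obtain ⟨z, hz, hzc⟩ := hc.exists_mapClusterPt_of_frequently hfr2
  have hzK : z ∈ K := by
    refine hδ z fun s => ?_
    by_contra hlt
    push Not at hlt
    rw [mapClusterPt_iff_frequently] at hzc
    have := hzc {w | δ < Metric.infDist (φ s w) K}
      (continuousAt_const.eventually_lt (cont_dist' s).continuousAt hlt)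
    obtain ⟨t, ht, ht2⟩ := (this.and_eventually (eventually_le_atBot (-s))).exists
    rw [mem_ofPred_eq, ← φ.map_add] at ht
    exact absurd (hy (s + t) (by linarith)) (not_le.2 ht)
  have := h.dist_zero.2 hzK
  have hz2 : ε ≤ Metric.infDist z K := hz.2
  linarith

/-- Limits of exit points of orbits starting closer and closer to `K` are repelled by `K`. -/
theorem exit_limit (h : Glob φ K) {δ : ℝ}
    (hδ : ∀ x, (∀ t, Metric.infDist (φ t x) K ≤ δ) → x ∈ K)
    {x : ℕ → ℝ × ℝ} {s : ℕ → ℝ} {y : ℝ × ℝ} (hs : ∀ n, 0 ≤ s n)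
    (hx : Tendsto (fun n => Metric.infDist (x n) K) atTop (𝓝 0))
    (hst : ∀ n, ∀ r ∈ Icc 0 (s n), Metric.infDist (φ r (x n)) K ≤ δ)
    (hy : Tendsto (fun n => φ (s n) (x n)) atTop (𝓝 y)) (hyK : y ∉ K) :
    Tendsto s atTop atTop ∧ y ∈ Rset φ K := by
  have hinf : Tendsto s atTop atTop := by
    rw [tendsto_atTop]
    intro T
    by_contra hno
    have hfr : ∃ᶠ n in atTop, s n < T := by simpa only [not_eventually, not_le] using hno
    obtain ⟨η, hη, hu⟩ := h.unif T (half_pos (h.dist_pos hyK))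
    have h1 := (((Metric.continuous_infDist_pt K).tendsto y).comp hy).eventually_const_lt
      (half_lt_self (h.dist_pos hyK))
    obtain ⟨n, hn1, hn2, hn3⟩ := (hfr.and_eventually (h1.and (hx.eventually_lt_const hη))).exists
    exact absurd (hu _ hn3 (s n) ⟨by linarith [hs n], hn1.le⟩) (not_lt.2 (le_of_lt hn2))
  refine ⟨hinf, h.mem_R_of_stay hδ fun r hr => ?_⟩
  have h1 := ((cont_dist' (φ := φ) (K := K) r).tendsto y).comp hy
  refine le_of_tendsto h1 ?_
  filter_upwards [tendsto_atTop.1 hinf (-r)] with n hn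
  simp only [Function.comp]
  rw [← φ.map_add]
  exact hst n _ ⟨by linarith, by linarith⟩

/-- Open `δ`-neighborhoods of `K` are path connected. -/
theorem pathConn (h : Glob φ K) {δ : ℝ} (hδ : 0 < δ) :
    IsPathConnected {z | Metric.infDist z K < δ} := by
  have e : {z | Metric.infDist z K < δ} = Metric.thickening δ K := by
    ext z; exact (Metric.mem_thickening_iff_infDist_lt h.conn.nonempty).symm
  rw [e, ← Metric.isOpen_thickening.isConnected_iff_isPathConnected]
  obtain ⟨k0, hk0⟩ := h.conn.nonempty
  refine ⟨⟨k0, Metric.self_subset_thickening hδ K hk0⟩, isPreconnected_of_forall k0 fun z hz => ?_⟩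
  obtain ⟨k, hk, hzk⟩ := Metric.mem_thickening_iff.1 hz
  refine ⟨K ∪ Metric.ball k δ, union_subset (Metric.self_subset_thickening hδ K)
    (Metric.ball_subset_thickening hk δ), Or.inl hk0, Or.inr hzk, ?_⟩
  exact h.conn.isPreconnected.union k hk (Metric.mem_ball_self hδ)
    (convex_ball k δ).isPreconnected

end Glob


/-! ### A homoclinic orbit locally separates the complement of `K` -/

theorem joinedIn_orbit (φ : Flow ℝ (ℝ × ℝ)) (x : ℝ × ℝ) {a b : ℝ} {S : Set (ℝ × ℝ)}
    (hS : ∀ t ∈ uIcc a b, φ t x ∈ S) : JoinedIn S (φ a x) (φ b x) := by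
  refine JoinedIn.ofLine (f := fun s => φ (a + s * (b - a)) x)
    ((flow_cont φ x).comp (by fun_prop)).continuousOn (by simp) (by simp) ?_
  rintro _ ⟨s, hs, rfl⟩
  refine hS _ ?_
  rw [mem_uIcc]
  rcases le_total a b with hab | hab
  · left; constructor <;> nlinarith [hs.1, hs.2]
  · right; constructor <;> nlinarith [hs.1, hs.2]

namespace Glob

variable {φ : Flow ℝ (ℝ × ℝ)} {K : Set (ℝ × ℝ)}

theorem sep_cpt (h : Glob φ K) {C : Set (ℝ × ℝ)} (hC : IsCompact C) (hd : ∀ z ∈ C, z ∉ K) :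
    ∃ δ > 0, ∀ z ∈ C, δ < Metric.infDist z K := by
  rcases C.eq_empty_or_nonempty with rfl | hne
  · exact ⟨1, one_pos, by simp⟩
  obtain ⟨z, hz, hmin⟩ := hC.exists_isMinOn hne (Metric.continuous_infDist_pt K).continuousOn
  have := h.dist_pos (hd z hz)
  exact ⟨_, half_pos this, fun w hw => (half_lt_self this).trans_le (hmin hw)⟩

theorem tail_A (h : Glob φ K) {x : ℝ × ℝ} (hx : x ∈ Aset φ K) {ε : ℝ} (hε : 0 < ε) :
    ∃ T, ∀ t, T ≤ t → Metric.infDist (φ t x) K < ε :=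
  eventually_atTop.1 ((h.mem_A_iff.1 hx).eventually (gt_mem_nhds hε))

theorem tail_R (h : Glob φ K) {x : ℝ × ℝ} (hx : x ∈ Rset φ K) {ε : ℝ} (hε : 0 < ε) :
    ∃ T, ∀ t, t ≤ T → Metric.infDist (φ t x) K < ε :=
  eventually_atBot.1 ((h.mem_R_iff.1 hx).eventually (gt_mem_nhds hε))

/-- Both ends of a homoclinic orbit are eventually close to `K`. -/
theorem tails (h : Glob φ K) {x : ℝ × ℝ} (hA : x ∈ Aset φ K) (hR : x ∈ Rset φ K) {ε : ℝ}
    (hε : 0 < ε) (T0 : ℝ) : ∃ T, T0 ≤ T ∧ ∀ t, T ≤ |t| → Metric.infDist (φ t x) K < ε := by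
  obtain ⟨T, hT⟩ := h.tail_A hA hε
  obtain ⟨T', hT'⟩ := h.tail_R hR hε
  refine ⟨max T0 (max T (-T')), le_max_left _ _, fun t ht => ?_⟩
  have h1 : T ≤ |t| := (le_max_left _ _).trans ((le_max_right _ _).trans ht)
  have h2 : -T' ≤ |t| := (le_max_right _ _).trans ((le_max_right _ _).trans ht)
  rcases abs_cases t with ⟨e, -⟩ | ⟨e, -⟩
  · exact hT t (by linarith)
  · exact hT' t (by linarith)

/-- Near each of its points, a homoclinic orbit has two points which cannot be joined by a path
avoiding `K` and the orbit. -/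
theorem two_sides_orbit (h : Glob φ K) {x : ℝ × ℝ} (hx : x ∉ K) (hA : x ∈ Aset φ K)
    (hR : x ∈ Rset φ K) {U : Set (ℝ × ℝ)} (hU : U ∈ 𝓝 x) :
    ∃ q ∈ U, ∃ q' ∈ U, q ∉ K ∪ range (fun t => φ t x) ∧ q' ∉ K ∪ range (fun t => φ t x) ∧
      ¬ JoinedIn (K ∪ range (fun t => φ t x))ᶜ q q' := by
  have hd := h.dist_pos hx
  set ε := Metric.infDist x K / 2 with hεd
  have hε : 0 < ε := half_pos hd
  have hV : U ∩ {z | ε < Metric.infDist z K} ∈ 𝓝 x := inter_mem hU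
    ((isOpen_lt continuous_const (Metric.continuous_infDist_pt K)).mem_nhds (half_lt_self hd))
  have hV' : toC.symm ⁻¹' (U ∩ {z | ε < Metric.infDist z K}) ∈ 𝓝 (toC x) :=
    toC.symm.continuous.continuousAt.preimage_mem_nhds (by simpa using hV)
  obtain ⟨r, hr, hball⟩ := Metric.mem_nhds_iff.1 hV'
  have hB : ∀ z, toC z ∈ Metric.ball (toC x) r → z ∈ U ∧ ε < Metric.infDist z K := by
    intro z hz
    have := hball hz
    simpa using this
  obtain ⟨T, hT1, hT⟩ := h.tails hA hR hε 1
  have hT0 : (0 : ℝ) < T := by linarith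
  set γ : ℝ → ℂ := fun t => toC (φ (T * t) x) with hγ
  have hγc : Continuous γ := toC.continuous.comp ((flow_cont φ x).comp (by fun_prop))
  have hinj : InjOn γ (Icc (-1) 1) := by
    intro s _ t _ e
    have := h.inj hx _ _ (toC.injective e)
    exact mul_left_cancel₀ hT0.ne' this
  have hout : ∀ t, T ≤ |t| → toC (φ t x) ∉ Metric.ball (toC x) r := fun t ht hm =>
    lt_asymm (hT t ht) (hB _ hm).2
  have e0 : γ 0 = toC x := by simp [hγ]
  have e1 : γ 1 = toC (φ T x) := by simp [hγ]
  have en1 : γ (-1) = toC (φ (-T) x) := by simp [hγ]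
  have hTa : T ≤ |T| := le_abs_self T
  have hTb : T ≤ |-T| := by rw [abs_neg]; exact hTa
  obtain ⟨q, hq, q', hq', hqγ, hq'γ, key⟩ := two_sides hγc hinj hr
    (by rw [e0, e1]; exact hout _ hTa) (by rw [e0, en1]; exact hout _ hTb)
  rw [e0] at hq hq' key
  obtain ⟨q, rfl⟩ := toC.surjective q
  obtain ⟨q', rfl⟩ := toC.surjective q'
  have hnot : ∀ z, toC z ∈ Metric.ball (toC x) r → toC z ∉ γ '' Icc (-1) 1 →
      z ∉ K ∪ range (fun t => φ t x) := by
    rintro z hz hzγ (hk | ⟨t, rfl⟩)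
    · have := (hB z hz).2
      rw [h.dist_zero.2 hk] at this
      exact lt_asymm hε this
    · rcases le_or_gt T |t| with ht | ht
      · exact hout t ht hz
      · refine hzγ ⟨t / T, ?_, by simp [hγ, mul_div_cancel₀ _ hT0.ne']⟩
        rw [abs_lt] at ht
        rw [mem_Icc, le_div_iff₀ hT0, div_le_iff₀ hT0]
        constructor <;> linarith
  refine ⟨q, (hB _ hq).1, q', (hB _ hq').1, hnot _ hq hqγ, hnot _ hq' hq'γ, fun hj => ?_⟩
  obtain ⟨c, hc, hc0, hc1, hcS⟩ := JoinedIn.exists_fun hj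
  obtain ⟨δ, hδ, hδc⟩ := h.sep_cpt (isCompact_Icc.image hc) (C := c '' Icc 0 1) (by
    rintro _ ⟨s, hs, rfl⟩ hk; exact hcS s hs (Or.inl hk))
  have hδ' : 0 < min δ ε := lt_min hδ hε
  obtain ⟨M, hMT, hM⟩ := h.tails hA hR hδ' T
  have hM0 : 0 < M := hT0.trans_le hMT
  set S : Set (ℝ × ℝ) := {z | Metric.infDist z K < min δ ε} ∪ (fun t => φ t x) '' {t | T ≤ |t|}
  have j1 : JoinedIn S (φ T x) (φ M x) := joinedIn_orbit φ x fun t ht => Or.inr ⟨t, by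
    rw [uIcc_of_le hMT] at ht; exact ht.1.trans (le_abs_self t), rfl⟩
  have j3 : JoinedIn S (φ (-M) x) (φ (-T) x) := joinedIn_orbit φ x fun t ht => Or.inr ⟨t, by
    rw [uIcc_of_le (by linarith)] at ht
    have : T ≤ -t := by linarith [ht.2]
    exact this.trans (neg_le_abs t), rfl⟩
  have j2 : JoinedIn S (φ M x) (φ (-M) x) :=
    ((h.pathConn hδ').joinedIn _ (hM M (le_abs_self M)) _
      (hM (-M) (by rw [abs_neg]; exact le_abs_self M))).mono subset_union_left
  obtain ⟨d, hdc, hd0, hd1, hdS⟩ := JoinedIn.exists_fun ((j1.trans j2).trans j3)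
  refine key (fun t => toC (d t)) (fun t => toC (c t)) (toC.continuous.comp hdc)
    (toC.continuous.comp hc) (by simp only [hd0, e1]) (by simp only [hd1, en1])
    (by simp only [hc0]) (by simp only [hc1]) ?_ ?_ ?_
  · intro t ht hm
    rcases hdS t ht with hs | ⟨s, hs, es⟩
    · exact lt_asymm (hB _ hm).2 (lt_of_lt_of_le hs (min_le_right _ _))
    · exact hout s hs (by simpa only [es] using hm)
  · intro s hs t ht e
    have e := toC.injective e
    rcases hdS t ht with h1 | ⟨s', _, es⟩
    · have := hδc (c s) ⟨s, hs, rfl⟩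
      rw [e] at this
      exact lt_asymm this (lt_of_lt_of_le h1 (min_le_left _ _))
    · exact hcS s hs (Or.inr ⟨s', by simp only [es, e]⟩)
  · rintro s hs ⟨t, _, e⟩
    exact hcS s hs (Or.inr ⟨T * t, toC.injective e⟩)

end Glob


/-! ### Orbits attracted by `K` that recur in negative time are homoclinic -/

theorem dist_openSegment {u v w : ℝ × ℝ} (huv : u ≠ v) (hw : w ∈ openSegment ℝ u v) :
    dist w u < dist u v ∧ dist w v < dist u v := by
  rw [openSegment_eq_image_lineMap] at hw
  obtain ⟨c, ⟨hc0, hc1⟩, rfl⟩ := hw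
  have hd := dist_pos.2 huv
  rw [dist_lineMap_left, dist_lineMap_right, Real.norm_of_nonneg hc0.le,
    Real.norm_of_nonneg (by linarith)]
  constructor <;> nlinarith

namespace Glob

variable {φ : Flow ℝ (ℝ × ℝ)} {K : Set (ℝ × ℝ)}

/-- Two passages of an orbit near a point `y` outside it, after a time `s` at which the orbit is
closer to `K` than at any time in `(s, 0]`, close up to two disjoint arcs with crossing ends:
one is the piece of orbit between the passages, the other runs along the orbit towards `K`,
through a neighborhood of `K`, and along the orbit from time `s`. -/
theorem return_crossing (h : Glob φ K) {x y : ℝ × ℝ} (hx : x ∉ K) (hA : x ∈ Aset φ K)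
    (hy : y ∉ K) (hyx : ∀ t, φ t x ≠ y) :
    ∃ κ > 0, ∃ W ∈ 𝓝 y, ∀ s a b κ', s ≤ a → a + 3 ≤ b → b ≤ 0 → φ a x ∈ W → φ b x ∈ W →
      κ' < κ → Metric.infDist (φ s x) K ≤ κ' →
      (∀ t ∈ Ioc s 0, κ' < Metric.infDist (φ t x) K) → False := by
  obtain ⟨O, hO, hyO, cross⟩ := flow_crossing φ (h.inj hy)
  have hdy := h.dist_pos hy
  set ε := Metric.infDist y K / 2 with hεd
  have hε : 0 < ε := half_pos hdy
  obtain ⟨T0, hT0⟩ := h.tail_A hA hε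
  have n1 : ∀ᶠ z in 𝓝 y, z ∈ O ∧ ε < Metric.infDist z K ∧ z ∉ (fun t => φ t x) '' Icc 0 T0 := by
    have e1 : ∀ᶠ z in 𝓝 y, z ∈ O := hO.mem_nhds hyO
    have e2 : ∀ᶠ z in 𝓝 y, ε < Metric.infDist z K := (isOpen_lt continuous_const
      (Metric.continuous_infDist_pt K)).mem_nhds (half_lt_self hdy)
    refine e1.and (e2.and ?_)
    refine (isCompact_Icc.image (flow_cont φ x)).isClosed.isOpen_compl.mem_nhds ?_
    rintro ⟨t, _, e⟩
    exact hyx t e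
  have n2 : ∀ᶠ p in 𝓝 (y, y), ∀ s ∈ Icc (1 : ℝ) 3, φ s (p : (ℝ × ℝ) × (ℝ × ℝ)).1 ≠ p.2 := by
    refine isCompact_Icc.eventually_forall_of_forall_eventually fun s hs => ?_
    have hc : Continuous fun w : ((ℝ × ℝ) × (ℝ × ℝ)) × ℝ => φ w.2 w.1.1 :=
      φ.continuous continuous_snd (continuous_fst.comp continuous_fst)
    have hc2 : Continuous fun w : ((ℝ × ℝ) × (ℝ × ℝ)) × ℝ => w.1.2 := by fun_prop
    refine (isOpen_ne_fun hc hc2).mem_nhds ?_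
    intro e
    have := h.inj hy s 0 (by simpa using e)
    linarith [hs.1]
  rw [nhds_prod_eq] at n2
  obtain ⟨N, hN, hNp⟩ := (eventually_prod_self_iff
    (r := fun z z' => ∀ s ∈ Icc (1 : ℝ) 3, φ s z ≠ z')).1 n2
  obtain ⟨ρ, hρ, hball⟩ := Metric.nhds_basis_closedBall.mem_iff.1 (n1.and hN)
  obtain ⟨κ1, hκ1, hκ⟩ := h.unif 1 hε
  have hB1 : ∀ z ∈ Metric.closedBall y ρ, z ∈ O := fun z hz => (hball hz).1.1
  have hB2 : ∀ z ∈ Metric.closedBall y ρ, ε < Metric.infDist z K := fun z hz => (hball hz).1.2.1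
  have hB3 : ∀ t, 0 ≤ t → φ t x ∉ Metric.closedBall y ρ := by
    intro t ht hm
    rcases le_or_gt t T0 with h1 | h1
    · exact (hball hm).1.2.2 ⟨t, ⟨ht, h1⟩, rfl⟩
    · exact lt_asymm (hT0 t h1.le) (hB2 _ hm)
  have hB4 : ∀ a b, φ a x ∈ Metric.closedBall y ρ → φ b x ∈ Metric.closedBall y ρ →
      a + 1 ≤ b → a + 3 < b := by
    intro a b ha hb hab
    by_contra hlt
    push Not at hlt
    refine hNp _ (hball ha).2 _ (hball hb).2 (b - a) ⟨by linarith, by linarith⟩ ?_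
    simp only [← φ.map_add]
    congr 1; ring
  refine ⟨min κ1 ε, lt_min hκ1 hε, _, Metric.closedBall_mem_nhds y hρ, ?_⟩
  intro s a b κ' hsa hab hb0 ha hb hκ' hfs hrec
  -- replace the two passages by a closest pair, so that the orbit misses the segment between them
  set C : Set (ℝ × ℝ) := {p | s ≤ p.1 ∧ p.1 + 3 ≤ p.2 ∧ p.2 ≤ 0 ∧
    φ p.1 x ∈ Metric.closedBall y ρ ∧ φ p.2 x ∈ Metric.closedBall y ρ} with hC
  have c1 : Continuous fun p : ℝ × ℝ => φ p.1 x := (flow_cont φ x).comp continuous_fst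
  have c2 : Continuous fun p : ℝ × ℝ => φ p.2 x := (flow_cont φ x).comp continuous_snd
  have hCc : IsCompact C := by
    refine (isCompact_Icc (a := ((s, s) : ℝ × ℝ)) (b := (0, 0))).of_isClosed_subset ?_ ?_
    · exact (isClosed_le continuous_const continuous_fst).inter
        ((isClosed_le (by fun_prop) continuous_snd).inter
        ((isClosed_le continuous_snd continuous_const).inter
        ((Metric.isClosed_closedBall.preimage c1).inter (Metric.isClosed_closedBall.preimage c2))))
    · rintro ⟨p, q⟩ ⟨h1, h2, h3, -⟩
      simp only at h1 h2 h3
      rw [mem_Icc, Prod.mk_le_mk, Prod.mk_le_mk]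
      refine ⟨⟨?_, ?_⟩, ?_, ?_⟩ <;> linarith
  obtain ⟨⟨t2, t1⟩, ⟨hs2, h21, h10, hu, hv⟩, hmin⟩ := hCc.exists_isMinOn
    ⟨(a, b), hsa, hab, hb0, ha, hb⟩ (c1.dist c2).continuousOn
  simp only at hs2 h21 h10 hu hv
  have hmin' : ∀ p q, s ≤ p → p + 3 ≤ q → q ≤ 0 → φ p x ∈ Metric.closedBall y ρ →
      φ q x ∈ Metric.closedBall y ρ → dist (φ t2 x) (φ t1 x) ≤ dist (φ p x) (φ q x) :=
    fun p q k1 k2 k3 k4 k5 => hmin (show (p, q) ∈ C from ⟨k1, k2, k3, k4, k5⟩)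
  have huv : φ t2 x ≠ φ t1 x := fun e => by have := h.inj hx _ _ e; linarith
  have hseg : segment ℝ (φ t2 x) (φ t1 x) ⊆ Metric.closedBall y ρ :=
    (convex_closedBall y ρ).segment_subset hu hv
  have hfree : ∀ c, s ≤ c → φ c x ∈ segment ℝ (φ t2 x) (φ t1 x) → c = t2 ∨ c = t1 := by
    intro c hsc hc
    have hcB := hseg hc
    rw [← insert_endpoints_openSegment] at hc
    rcases hc with e | e | hc
    · exact Or.inl (h.inj hx _ _ e)
    · exact Or.inr (h.inj hx _ _ e)
    exfalso
    obtain ⟨d1, d2⟩ := dist_openSegment huv hc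
    have hc0 : c ≤ 0 := by
      by_contra hlt
      exact hB3 c (not_le.1 hlt).le hcB
    -- a passage `τ` with `1 ≤ |c - τ|` has `3 < |c - τ|` by `hB4`, so the minimality of
    -- `(t2, t1)` applies to `c` and `τ`
    have far : ∀ τ, s ≤ τ → τ ≤ 0 → φ τ x ∈ Metric.closedBall y ρ →
        dist (φ c x) (φ τ x) < dist (φ t2 x) (φ t1 x) → |c - τ| < 1 := by
      intro τ hτs hτ0 hτ hdist
      by_contra hlt
      push Not at hlt
      rcases abs_cases (c - τ) with ⟨e, -⟩ | ⟨e, -⟩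
      · have := hB4 τ c hτ hcB (by linarith)
        have := hmin' τ c hτs this.le hc0 hτ hcB
        rw [dist_comm] at hdist
        linarith
      · have := hB4 c τ hcB hτ (by linarith)
        have := hmin' c τ hsc this.le hτ0 hcB hτ
        linarith
    have k1 := abs_lt.1 (far t2 hs2 (by linarith) hu d1)
    have k2 := abs_lt.1 (far t1 (by linarith) h10 hv d2)
    linarith [k1.1, k1.2, k2.1, k2.2]
  have hnear : ∀ τ ∈ Icc s (s + 1), Metric.infDist (φ τ x) K < ε := by
    intro τ hτ
    have := hκ (φ s x) (by linarith [min_le_left κ1 ε]) (τ - s)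
      ⟨by linarith [hτ.1], by linarith [hτ.2]⟩
    rwa [← φ.map_add, sub_add_cancel] at this
  have hs2' : s + 1 < t2 := by
    by_contra hlt
    push Not at hlt
    exact lt_asymm (hnear t2 ⟨hs2, hlt⟩) (hB2 _ hu)
  obtain ⟨tm, htm, hmin2⟩ := isCompact_Icc.exists_isMinOn (⟨t2, by simp; linarith⟩ :
    (Icc t2 t1).Nonempty) (cont_dist (φ := φ) (K := K) x).continuousOn
  have hm1 : κ' < min (Metric.infDist (φ tm x) K) ε := lt_min
    (hrec tm ⟨by linarith [htm.1], by linarith [htm.2]⟩) (hκ'.trans_le (min_le_right _ _))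
  set δ := min (Metric.infDist (φ tm x) K) ε with hδ
  have hδ0 : 0 < δ := (Metric.infDist_nonneg.trans hfs).trans_lt hm1
  have hδt : ∀ t ∈ Icc t2 t1, δ ≤ Metric.infDist (φ t x) K := fun t ht =>
    (min_le_left _ _).trans (hmin2 ht)
  obtain ⟨M0, hM0⟩ := h.tail_A hA hδ0
  set M := max M0 (t1 + 1)
  have hM := hM0 M (le_max_left _ _)
  -- `Sc` is the orbit between the passages; `Sd` closes up its two ends near `K`
  set Sc : Set (ℝ × ℝ) := (fun t => φ t x) '' Icc (t2 + 1) (t1 - 1) with hSc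
  set Sd : Set (ℝ × ℝ) := ((fun t => φ t x) '' Ici (t1 + 1) ∪ (fun t => φ t x) '' Icc s (t2 - 1))
    ∪ {z | Metric.infDist z K < δ} with hSd
  have jc : JoinedIn Sc (φ 1 (φ t2 x)) (φ (-1) (φ t1 x)) := by
    rw [← φ.map_add, ← φ.map_add, add_comm 1, neg_add_eq_sub]
    refine joinedIn_orbit φ x fun t ht => ⟨t, ?_, rfl⟩
    rwa [uIcc_of_le (by linarith)] at ht
  have jd : JoinedIn Sd (φ 1 (φ t1 x)) (φ (-1) (φ t2 x)) := by
    rw [← φ.map_add, ← φ.map_add, add_comm 1, neg_add_eq_sub]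
    have j1 : JoinedIn Sd (φ (t1 + 1) x) (φ M x) := joinedIn_orbit φ x fun t ht =>
      Or.inl (Or.inl ⟨t, by rw [uIcc_of_le (le_max_right _ _)] at ht; exact ht.1, rfl⟩)
    have j2 : JoinedIn Sd (φ M x) (φ s x) :=
      ((h.pathConn hδ0).joinedIn _ hM _ (hfs.trans_lt hm1)).mono subset_union_right
    have j3 : JoinedIn Sd (φ s x) (φ (t2 - 1) x) := joinedIn_orbit φ x fun t ht =>
      Or.inl (Or.inr ⟨t, by rwa [uIcc_of_le (by linarith)] at ht, rfl⟩)
    exact (j1.trans j2).trans j3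
  -- the orbit misses `Sd` at times in `(t2 - 1, t1 + 1)` at which it is `δ`-far from `K`
  have hSd' : ∀ t, t2 - 1 < t → t < t1 + 1 → δ ≤ Metric.infDist (φ t x) K → φ t x ∉ Sd := by
    rintro t k1 k2 k3 ((⟨r, hr, e⟩ | ⟨r, hr, e⟩) | hlt)
    · have := h.inj hx _ _ e; rw [mem_Ici] at hr; linarith
    · have := h.inj hx _ _ e; linarith [hr.2]
    · exact absurd hlt (not_lt.2 k3)
  have hSc' : ∀ t, (t < t2 + 1 ∨ t1 - 1 < t) → φ t x ∉ Sc := by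
    rintro t k1 ⟨r, hr, e⟩
    have := h.inj hx _ _ e
    rcases k1 with k1 | k1 <;> linarith [hr.1, hr.2]
  refine cross (φ t2 x) (hB1 _ hu) (φ t1 x) (hB1 _ hv) Sc Sd jc jd ?_ ?_ ?_ ?_ ?_ ?_ ?_ ?_
  · rw [Set.disjoint_left]
    rintro _ ⟨t, ht, rfl⟩
    exact hSd' t (by linarith [ht.1]) (by linarith [ht.2])
      (hδt t ⟨by linarith [ht.1], by linarith [ht.2]⟩)
  · intro p hp q hq e
    rw [← φ.map_add, ← φ.map_add] at e
    have := h.inj hx _ _ e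
    linarith [hp.1, hp.2, hq.1, hq.2]
  · intro p hp
    rw [← φ.map_add]
    exact hSc' _ (Or.inl (by linarith [hp.2]))
  · intro p hp
    rw [← φ.map_add]
    exact hSc' _ (Or.inr (by linarith [hp.1]))
  · rw [Set.disjoint_left]
    rintro _ hz ⟨t, ht, rfl⟩
    rcases hfree t (by linarith [ht.1]) hz with e | e <;> linarith [ht.1, ht.2]
  · intro p hp
    rw [← φ.map_add]
    exact hSd' _ (by linarith [hp.1]) (by linarith [hp.2])
      (hδt _ ⟨by linarith [hp.1], by linarith [hp.2]⟩)
  · intro p hp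
    rw [← φ.map_add]
    exact hSd' _ (by linarith [hp.1]) (by linarith [hp.2])
      (hδt _ ⟨by linarith [hp.1], by linarith [hp.2]⟩)
  · rw [Set.disjoint_left]
    rintro z hz ((⟨t, ht, rfl⟩ | ⟨t, ht, rfl⟩) | hlt)
    · rw [mem_Ici] at ht
      rcases hfree t (by linarith) hz with e | e <;> linarith
    · rcases hfree t ht.1 hz with e | e <;> linarith [ht.2]
    · exact lt_asymm (lt_of_lt_of_le hlt (min_le_right _ _)) (hB2 z (hseg hz))

end Glob


theorem last_below {f : ℝ → ℝ} (hf : Continuous f) {a κ : ℝ} (ha : a ≤ 0) (hfa : f a ≤ κ) :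
    ∃ s ∈ Icc a 0, f s ≤ κ ∧ ∀ t ∈ Ioc s 0, κ < f t := by
  have hc : IsCompact (Icc a 0 ∩ f ⁻¹' Iic κ) :=
    isCompact_Icc.inter_right (isClosed_Iic.preimage hf)
  obtain ⟨s, ⟨hs, hsκ⟩, hmax⟩ := hc.exists_isGreatest ⟨a, ⟨le_rfl, ha⟩, hfa⟩
  refine ⟨s, hs, hsκ, fun t ht => ?_⟩
  by_contra hlt
  push Not at hlt
  have : t ≤ s := hmax ⟨⟨hs.1.trans ht.1.le, ht.2⟩, hlt⟩
  exact absurd ht.1 (not_lt.2 this)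

namespace Glob

variable {φ : Flow ℝ (ℝ × ℝ)} {K : Set (ℝ × ℝ)}

/-- An orbit attracted but not repelled by `K` comes from infinity: otherwise it would approach
`K` along times going to `-∞`, and leave it again near some point `y` of `Rset φ K`, again and
again, contradicting `return_crossing`. -/
theorem escape_bot (h : Glob φ K) {x : ℝ × ℝ} (hx : x ∉ K) (hA : x ∈ Aset φ K)
    (hR : x ∉ Rset φ K) {C : Set (ℝ × ℝ)} (hC : IsCompact C) : ∃ T, ∀ t ≤ T, φ t x ∉ C := by
  by_contra hno
  push Not at hno
  have hfreq : ∃ᶠ t in atBot, φ t x ∈ C := frequently_atBot.2 fun a => by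
    obtain ⟨t, ht, hm⟩ := hno a
    exact ⟨t, ht, hm⟩
  obtain ⟨p, -, hp⟩ := hC.exists_mapClusterPt_of_frequently hfreq
  have hsmall : ∀ ε > 0, ∃ t ≤ 0, Metric.infDist (φ t x) K < ε := by
    intro ε hε
    obtain ⟨s, hs⟩ : ∃ s, Metric.infDist (φ s p) K < ε := by
      rcases h.glob p with h1 | h1
      · obtain ⟨T, hT⟩ := h.tail_A h1 hε
        exact ⟨T, hT T le_rfl⟩
      · obtain ⟨T, hT⟩ := h.tail_R h1 hε
        exact ⟨T, hT T le_rfl⟩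
    have hn : {z | Metric.infDist (φ s z) K < ε} ∈ 𝓝 p :=
      (isOpen_lt (cont_dist' (φ := φ) (K := K) s) continuous_const).mem_nhds hs
    obtain ⟨t, ht, hm⟩ := frequently_atBot.1 ((mapClusterPt_iff_frequently.1 hp) _ hn) (-s)
    refine ⟨s + t, by linarith, ?_⟩
    rw [φ.map_add]; exact hm
  obtain ⟨δ0, hδ0, hiso0⟩ := h.iso
  have hf0 := h.dist_pos hx
  set δ := min δ0 (Metric.infDist x K) with hδd
  have hδ : 0 < δ := lt_min hδ0 hf0
  have hiso : ∀ z, (∀ t, Metric.infDist (φ t z) K ≤ δ) → z ∈ K := fun z hz =>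
    hiso0 z fun t => (hz t).trans (min_le_left _ _)
  have hfc : Continuous fun t => Metric.infDist (φ t x) K := cont_dist (φ := φ) (K := K) x
  -- `s` is the last time at which the orbit is `δ / (n + 1)`-close to `K`, and `e` the first time
  -- after `s` at which its distance from `K` is `δ`
  have hstep : ∀ n : ℕ, ∃ s e : ℝ, s ≤ e ∧ e ≤ 0 ∧
      Metric.infDist (φ s x) K ≤ δ * (1 / ((n : ℝ) + 1)) ∧
      (∀ t ∈ Ioc s 0, δ * (1 / ((n : ℝ) + 1)) < Metric.infDist (φ t x) K) ∧
      Metric.infDist (φ e x) K = δ ∧ ∀ r ∈ Icc s e, Metric.infDist (φ r x) K ≤ δ := by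
    intro n
    have hn : 0 < 1 / ((n : ℝ) + 1) := Nat.one_div_pos_of_nat
    have hn1 : 1 / ((n : ℝ) + 1) ≤ 1 := by
      rw [div_le_one (by positivity)]; linarith [(Nat.cast_nonneg n : (0 : ℝ) ≤ n)]
    obtain ⟨a, ha0, ha⟩ := hsmall _ (mul_pos hδ hn)
    obtain ⟨s, hs, hsκ, hrec⟩ := last_below hfc ha0 ha.le
    obtain ⟨e, he, heδ, hst⟩ := first_exit (δ := δ) hfc hs.2
      (hsκ.trans (mul_le_of_le_one_right hδ.le hn1)) (by
        simp only [φ.map_zero_apply]; exact min_le_right _ _)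
    exact ⟨s, e, he.1, he.2, hsκ, hrec, heδ, hst⟩
  choose s e hse he0 hsκ hrec heδ hst using hstep
  have hκ0 : Tendsto (fun n : ℕ => δ * (1 / ((n : ℝ) + 1))) atTop (𝓝 0) := by
    simpa using tendsto_one_div_add_atTop_nhds_zero_nat.const_mul δ
  obtain ⟨y, hyδ, θ, hθ, hlim⟩ := (h.cpt_nhd δ).tendsto_subseq
    (x := fun n => φ (e n) x) fun n => (heδ n).le
  have hyδ' : Metric.infDist y K = δ := by
    refine tendsto_nhds_unique (((Metric.continuous_infDist_pt K).tendsto y).comp hlim) ?_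
    refine tendsto_const_nhds.congr fun n => ?_
    exact (heδ _).symm
  have hyK : y ∉ K := fun hk => by rw [h.dist_zero.2 hk] at hyδ'; exact hδ.ne hyδ'
  have hyR : y ∈ Rset φ K := by
    refine (h.exit_limit hiso (x := fun n => φ (s (θ n)) x) (s := fun n => e (θ n) - s (θ n))
      (fun n => sub_nonneg.2 (hse _)) ?_ ?_ ?_ hyK).2
    · exact squeeze_zero (fun n => Metric.infDist_nonneg) (fun n => hsκ (θ n))
        (hκ0.comp hθ.tendsto_atTop)
    · intro n r hr
      rw [← φ.map_add]
      exact hst (θ n) _ ⟨by linarith [hr.1], by linarith [hr.2]⟩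
    · refine hlim.congr fun n => ?_
      simp only [Function.comp, ← φ.map_add, sub_add_cancel]
  have hyx : ∀ t, φ t x ≠ y := by
    intro t et
    apply hR
    have := h.R_inv (-t) hyR
    rwa [← et, flow_neg] at this
  obtain ⟨κ, hκ, W, hW, hfalse⟩ := h.return_crossing hx hA hyK hyx
  have ev1 : ∀ᶠ n in atTop, φ (e (θ n)) x ∈ W := hlim.eventually hW
  have ev2 : ∀ᶠ n in atTop, δ * (1 / ((θ n : ℝ) + 1)) < κ :=
    (hκ0.comp hθ.tendsto_atTop).eventually (gt_mem_nhds hκ)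
  obtain ⟨n1, hn1⟩ := ev1.exists
  have ev3 : ∀ᶠ n in atTop, φ (e (θ n)) x ∈ ((fun t => φ t x) '' Icc (e (θ n1) - 3) 0)ᶜ := by
    refine hlim.eventually ((isCompact_Icc.image (flow_cont φ x)).isClosed.isOpen_compl.mem_nhds ?_)
    rintro ⟨t, _, et⟩
    exact hyx t et
  obtain ⟨n2, hW2, hκ2, hn2⟩ := (ev1.and (ev2.and ev3)).exists
  have hlt : e (θ n2) + 3 ≤ e (θ n1) := by
    by_contra hlt
    push Not at hlt
    exact hn2 ⟨_, ⟨by linarith, he0 _⟩, rfl⟩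
  exact hfalse (s (θ n2)) (e (θ n2)) (e (θ n1)) _ (hse _) hlt (he0 _) hW2 hn1 hκ2 (hsκ _) (hrec _)

theorem escape_top (h : Glob φ K) {x : ℝ × ℝ} (hx : x ∉ K) (hR : x ∈ Rset φ K)
    (hA : x ∉ Aset φ K) {C : Set (ℝ × ℝ)} (hC : IsCompact C) : ∃ T, ∀ t ≥ T, φ t x ∉ C := by
  rw [← Aset_reverse] at hR
  rw [← Rset_reverse] at hA
  obtain ⟨T, hT⟩ := h.reverse.escape_bot hx hR hA hC
  refine ⟨-T, fun t ht => ?_⟩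
  simpa [Flow.reverse_apply] using hT (-t) (by linarith)

/-- A point outside `K` with bounded orbit is homoclinic to `K`. -/
theorem homoclinic_of_bounded (h : Glob φ K) {x : ℝ × ℝ} (hx : x ∉ K) {C : Set (ℝ × ℝ)}
    (hC : IsCompact C) (hxC : ∀ t, φ t x ∈ C) : x ∈ Aset φ K ∧ x ∈ Rset φ K := by
  by_contra hno
  rcases h.glob x with h1 | h1
  · obtain ⟨T, hT⟩ := h.escape_bot hx h1 (fun h2 => hno ⟨h1, h2⟩) hC
    exact hT T le_rfl (hxC T)
  · obtain ⟨T, hT⟩ := h.escape_top hx h1 (fun h2 => hno ⟨h2, h1⟩) hC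
    exact hT T le_rfl (hxC T)

end Glob


/-! ### There are no homoclinic orbits -/

/-- The exterior of a ball in the plane is path connected. -/
theorem ext_conn {R : ℝ} (hR : 0 ≤ R) : IsPathConnected {z : ℝ × ℝ | R < ‖z‖} := by
  have h1 : IsPathConnected ({0}ᶜ : Set (ℝ × ℝ)) :=
    isPathConnected_compl_singleton_of_one_lt_rank (by simp [one_add_one_eq_two]) 0
  have hc : ContinuousOn (fun z : ℝ × ℝ => (1 + R / ‖z‖) • z) {0}ᶜ := by
    refine ContinuousOn.smul (continuousOn_const.add (continuousOn_const.div
      continuous_norm.continuousOn fun z hz => norm_ne_zero_iff.2 hz)) continuousOn_id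
  have e : {z : ℝ × ℝ | R < ‖z‖} = (fun z : ℝ × ℝ => (1 + R / ‖z‖) • z) '' {0}ᶜ := by
    ext w
    constructor
    · intro hw
      have hw : R < ‖w‖ := hw
      have hw0 : 0 < ‖w‖ := hR.trans_lt hw
      have hp : 0 < 1 - R / ‖w‖ := by rw [sub_pos, div_lt_one hw0]; exact hw
      refine ⟨(1 - R / ‖w‖) • w, ?_, ?_⟩
      · exact smul_ne_zero hp.ne' (norm_pos_iff.1 hw0)
      · simp only [norm_smul, Real.norm_of_nonneg hp.le, smul_smul]
        have e1 : (1 - R / ‖w‖) * ‖w‖ = ‖w‖ - R := by field_simp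
        rw [e1]
        have e2 : (1 + R / (‖w‖ - R)) * (1 - R / ‖w‖) = 1 := by
          have : ‖w‖ - R ≠ 0 := (sub_pos.2 hw).ne'
          field_simp
          ring
        rw [e2, one_smul]
    · rintro ⟨z, hz, rfl⟩
      have hz0 : 0 < ‖z‖ := norm_pos_iff.2 hz
      simp only [mem_ofPred_eq, norm_smul]
      rw [Real.norm_of_nonneg (by positivity)]
      have : (1 + R / ‖z‖) * ‖z‖ = ‖z‖ + R := by field_simp
      linarith
  rw [e]
  exact h1.image' hc

/-- At most one component of the complement of a planar compact set is unbounded. -/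
theorem bounded_or {L : Set (ℝ × ℝ)} (hL : IsCompact L) {a b : ℝ × ℝ}
    (hab : ¬ JoinedIn Lᶜ a b) :
    Bornology.IsBounded (pathComponentIn Lᶜ a) ∨ Bornology.IsBounded (pathComponentIn Lᶜ b) := by
  obtain ⟨R, hR⟩ := hL.isBounded.exists_norm_le
  have hsub : {z : ℝ × ℝ | max R 0 < ‖z‖} ⊆ Lᶜ := fun z hz hzL =>
    absurd ((hR z hzL).trans (le_max_left R 0)) (not_le.2 hz)
  have key : ∀ c, ¬ Bornology.IsBounded (pathComponentIn Lᶜ c) →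
      ∃ z, JoinedIn Lᶜ c z ∧ max R 0 < ‖z‖ := by
    intro c hc
    by_contra hno
    push Not at hno
    exact hc (isBounded_iff_forall_norm_le.2 ⟨_, fun z hz => hno z hz⟩)
  by_contra hno
  push Not at hno
  obtain ⟨z, hz, hz'⟩ := key a hno.1
  obtain ⟨w, hw, hw'⟩ := key b hno.2
  exact hab ((hz.trans (((ext_conn (le_max_right R 0)).joinedIn z hz' w hw').mono hsub)).trans
    hw.symm)

theorem mem_of_closure_comp {F : Set (ℝ × ℝ)} (hF : IsOpen F) {a z : ℝ × ℝ}
    (hz : z ∈ closure (pathComponentIn F a)) (hzF : z ∈ F) : z ∈ pathComponentIn F a := by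
  obtain ⟨w, hw1, hw2⟩ := mem_closure_iff.1 hz _ (hF.pathComponentIn z) (mem_pathComponentIn_self hzF)
  exact JoinedIn.trans hw2 (JoinedIn.symm hw1)

theorem comp_inv {φ : Flow ℝ (ℝ × ℝ)} {F : Set (ℝ × ℝ)} (hF : ∀ z ∈ F, ∀ t, φ t z ∈ F)
    {a z : ℝ × ℝ} (hz : JoinedIn F a z) (t : ℝ) : JoinedIn F a (φ t z) := by
  refine hz.trans ?_
  have := joinedIn_orbit φ z (a := 0) (b := t) (S := F) fun s _ => hF z hz.target_mem s
  simpa using this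

namespace Glob

variable {φ : Flow ℝ (ℝ × ℝ)} {K : Set (ℝ × ℝ)}

theorem orbit_cpt (h : Glob φ K) {x : ℝ × ℝ} (hA : x ∈ Aset φ K) (hR : x ∈ Rset φ K) :
    IsCompact (K ∪ range fun t => φ t x) := by
  have hcl : IsClosed (K ∪ range fun t => φ t x) := by
    rw [← isOpen_compl_iff, isOpen_iff_mem_nhds]
    intro z hz
    have hzK : z ∉ K := fun hk => hz (Or.inl hk)
    have hd := h.dist_pos hzK
    obtain ⟨T, -, hT⟩ := h.tails hA hR (half_pos hd) 0
    have n1 : {w | Metric.infDist z K / 2 < Metric.infDist w K} ∈ 𝓝 z :=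
      (isOpen_lt continuous_const (Metric.continuous_infDist_pt K)).mem_nhds (half_lt_self hd)
    have n2 : ((fun t => φ t x) '' Icc (-T) T)ᶜ ∈ 𝓝 z := by
      refine (isCompact_Icc.image (flow_cont φ x)).isClosed.isOpen_compl.mem_nhds ?_
      rintro ⟨t, _, rfl⟩
      exact hz (Or.inr ⟨t, rfl⟩)
    filter_upwards [n1, n2] with w hw1 hw2
    rintro (hk | ⟨t, rfl⟩)
    · rw [h.dist_zero.2 hk] at hw1; linarith
    · rcases le_or_gt T |t| with ht | ht
      · exact lt_asymm hw1 (hT t ht)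
      · exact hw2 ⟨t, abs_le.1 ht.le, rfl⟩
  obtain ⟨T, -, hT⟩ := h.tails hA hR one_pos 0
  refine ((h.cpt_nhd 1).union (isCompact_Icc.image (flow_cont φ x) (s := Icc (-T) T))).of_isClosed_subset
    hcl ?_
  rintro z (hk | ⟨t, rfl⟩)
  · left; rw [mem_ofPred_eq, h.dist_zero.2 hk]; exact zero_le_one
  · rcases le_or_gt T |t| with ht | ht
    · exact Or.inl (hT t ht).le
    · exact Or.inr ⟨t, abs_le.1 ht.le, rfl⟩

theorem compl_orbit_inv (h : Glob φ K) (x : ℝ × ℝ) :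
    ∀ z ∈ (K ∪ range fun t => φ t x)ᶜ, ∀ t, φ t z ∈ (K ∪ range fun t => φ t x)ᶜ := by
  rintro z hz t (hk | ⟨s, e⟩)
  · exact h.notK_inv t (fun hk => hz (Or.inl hk)) hk
  · refine hz (Or.inr ⟨-t + s, ?_⟩)
    simp only at e ⊢
    rw [φ.map_add, e, flow_neg]

/-- No orbit outside `K` is both attracted and repelled by `K`. Otherwise some bounded component
`D` of the complement of `K` and the orbit of `p` consists of homoclinic points. For `z ∈ D` let
`G z` be the component of `p` in the complement of `K` and the orbit of `z`. The sets
`(closure D ∪ K) \ G z` have a minimal element, and for the corresponding `z` there is `q ∈ D` on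
another orbit with `G q = G z`. So `G z` has its boundary in `K`, which is absurd since `p` and
`z` lie in the same component of the complement of `K`. -/
theorem no_homoclinic (h : Glob φ K) {p : ℝ × ℝ} (hp : p ∉ K) (hA : p ∈ Aset φ K)
    (hR : p ∈ Rset φ K) : False := by
  have hKo : IsOpen Kᶜ := h.cpt.isClosed.isOpen_compl
  have hpc := h.orbit_cpt hA hR
  obtain ⟨a, haD, haK, hbd⟩ : ∃ a, JoinedIn Kᶜ p a ∧ a ∉ K ∪ range (fun t => φ t p) ∧
      Bornology.IsBounded (pathComponentIn (K ∪ range fun t => φ t p)ᶜ a) := by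
    obtain ⟨q, hq, q', hq', hqn, hqn', hnj⟩ := h.two_sides_orbit hp hA hR
      ((hKo.pathComponentIn p).mem_nhds (mem_pathComponentIn_self hp))
    rcases bounded_or hpc hnj with hb | hb
    · exact ⟨q, hq, hqn, hb⟩
    · exact ⟨q', hq', hqn', hb⟩
  have hF0o : IsOpen (K ∪ range fun t => φ t p)ᶜ := hpc.isClosed.isOpen_compl
  set D := pathComponentIn (K ∪ range fun t => φ t p)ᶜ a with hD
  have hDsub : ∀ z ∈ D, z ∉ K ∪ range fun t => φ t p := fun z hz => pathComponentIn_subset hz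
  have hDK : ∀ z ∈ D, z ∉ K := fun z hz hk => hDsub z hz (Or.inl hk)
  have hDo : IsOpen D := hF0o.pathComponentIn a
  have hDinv : ∀ z ∈ D, ∀ t, φ t z ∈ D := fun z hz t => comp_inv (h.compl_orbit_inv p) hz t
  have hDcpt : IsCompact (closure D) := hbd.isCompact_closure
  have hDhom : ∀ z ∈ D, z ∈ Aset φ K ∧ z ∈ Rset φ K := fun z hz =>
    h.homoclinic_of_bounded (hDK z hz) hDcpt fun t => subset_closure (hDinv z hz t)
  set F : ℝ × ℝ → Set (ℝ × ℝ) := fun z => (K ∪ range fun t => φ t z)ᶜ with hF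
  have hFo : ∀ z ∈ D, IsOpen (F z) := fun z hz =>
    (h.orbit_cpt (hDhom z hz).1 (hDhom z hz).2).isClosed.isOpen_compl
  set G : ℝ × ℝ → Set (ℝ × ℝ) := fun z => pathComponentIn (F z) p with hG
  set E : ℝ × ℝ → Set (ℝ × ℝ) := fun z => (closure D ∪ K) \ G z with hE
  have hself : ∀ z, ∀ t, φ t z ∉ F z := fun z t hz => hz (Or.inr ⟨t, rfl⟩)
  have hpF : ∀ z ∈ D, p ∈ F z := by
    rintro z hz (hk | ⟨t, e⟩)
    · exact hp hk
    · refine hDsub z hz (Or.inr ⟨-t, ?_⟩)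
      simp only at e ⊢
      rw [← e, flow_neg]
  have hEclosed : ∀ z ∈ D, IsCompact (E z) := fun z hz =>
    (hDcpt.union h.cpt).diff ((hFo z hz).pathComponentIn p)
  have hEself : ∀ z ∈ D, ∀ t, φ t z ∈ E z := fun z hz t =>
    ⟨Or.inl (subset_closure (hDinv z hz t)), fun hm => hself z t (pathComponentIn_subset hm)⟩
  have hED : ∀ z ∈ D, ∀ w ∈ E z, w ∉ K → w ∈ D := by
    rintro z hz w ⟨hw | hw, hwG⟩ hwK
    · refine mem_of_closure_comp hF0o hw ?_
      rintro (hk | ⟨t, rfl⟩)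
      · exact hwK hk
      · refine hwG ?_
        exact comp_inv (h.compl_orbit_inv z) (mem_pathComponentIn_self (hpF z hz)) t
    · exact absurd hw hwK
  have hGG : ∀ z ∈ D, ∀ w ∈ E z, w ∉ K → G z ⊆ G w := by
    intro z hz w hw hwK
    refine (isPathConnected_pathComponentIn (hpF z hz)).subset_pathComponentIn
      (mem_pathComponentIn_self (hpF z hz)) ?_
    rintro v hv (hk | ⟨t, rfl⟩)
    · exact pathComponentIn_subset hv (Or.inl hk)
    · refine hw.2 ?_
      have : JoinedIn (F z) p (φ (-t) (φ t w)) := comp_inv (h.compl_orbit_inv z) hv (-t)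
      rwa [flow_neg] at this
  -- passing from `z` to a point of `E z` outside `K` shrinks `E`
  have hEE : ∀ z ∈ D, ∀ w ∈ E z, w ∉ K → E w ⊆ E z := fun z hz w hw hwK =>
    sdiff_subset_sdiff_right (hGG z hz w hw hwK)
  have haDm : a ∈ D := mem_pathComponentIn_self haK
  obtain ⟨δ, hδ, hiso⟩ := h.iso
  obtain ⟨m, hm⟩ := zorn_superset (E '' D) (by
    intro c hc hch
    rcases c.eq_empty_or_nonempty with rfl | hcne
    · exact ⟨E a, ⟨a, haDm, rfl⟩, by simp⟩
    -- trace the chain on a closed set away from `K`, which no orbit in `D` can avoid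
    have hne : (⋂ i : c, i.1 ∩ {z | δ ≤ Metric.infDist z K}).Nonempty := by
      have hcl : IsClosed {z : ℝ × ℝ | δ ≤ Metric.infDist z K} :=
        isClosed_le continuous_const (Metric.continuous_infDist_pt K)
      have hcs : Nonempty c := hcne.to_subtype
      refine IsCompact.nonempty_iInter_of_directed_nonempty_isCompact_isClosed _ ?_ ?_ ?_ ?_
      · rintro ⟨s, hs⟩ ⟨t, ht⟩
        rcases hch.total hs ht with hst | hst
        · exact ⟨⟨s, hs⟩, subset_rfl, inter_subset_inter_left _ hst⟩
        · exact ⟨⟨t, ht⟩, inter_subset_inter_left _ hst, subset_rfl⟩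
      · rintro ⟨s, hs⟩
        obtain ⟨z, hz, rfl⟩ := hc hs
        have : ∃ t, δ < Metric.infDist (φ t z) K := by
          by_contra hno
          push Not at hno
          exact hDK z hz (hiso z hno)
        obtain ⟨t, ht⟩ := this
        exact ⟨φ t z, hEself z hz t, ht.le⟩
      · rintro ⟨s, hs⟩
        obtain ⟨z, hz, rfl⟩ := hc hs
        exact (hEclosed z hz).inter_right hcl
      · rintro ⟨s, hs⟩
        obtain ⟨z, hz, rfl⟩ := hc hs
        exact ((hEclosed z hz).inter_right hcl).isClosed
    obtain ⟨w, hw⟩ := hne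
    have hw1 : ∀ s ∈ c, w ∈ s ∧ δ ≤ Metric.infDist w K := fun s hs =>
      mem_iInter.1 hw ⟨s, hs⟩
    obtain ⟨s0, hs0⟩ := hcne
    have hwK : w ∉ K := fun hk => by
      have := (hw1 s0 hs0).2
      rw [h.dist_zero.2 hk] at this; linarith
    have hwD : w ∈ D := by
      obtain ⟨z, hz, e⟩ := hc hs0
      exact hED z hz w (by rw [e]; exact (hw1 s0 hs0).1) hwK
    refine ⟨E w, ⟨w, hwD, rfl⟩, fun s hs => ?_⟩
    obtain ⟨z, hz, e⟩ := hc hs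
    rw [← e]
    exact hEE z hz w (by rw [e]; exact (hw1 s hs).1) hwK)
  obtain ⟨z, hz, rfl⟩ := hm.prop
  obtain ⟨q, hqD, hqK, hqG⟩ : ∃ q ∈ D, q ∉ K ∪ range (fun t => φ t z) ∧ q ∉ G z := by
    obtain ⟨q, hq, q', hq', hqn, hqn', hnj⟩ := h.two_sides_orbit (hDK z hz) (hDhom z hz).1
      (hDhom z hz).2 (hDo.mem_nhds hz)
    by_cases hqG : q ∈ G z
    · refine ⟨q', hq', hqn', fun hq'G => hnj ?_⟩
      exact (JoinedIn.symm hqG).trans hq'G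
    · exact ⟨q, hq, hqn, hqG⟩
  have hqE : q ∈ E z := ⟨Or.inl (subset_closure hqD), hqG⟩
  have hEq : E z ⊆ E q := hm.le_of_le ⟨q, hqD, rfl⟩ (hEE z hz q hqE (hDK q hqD))
  have hzE : z ∈ E q := hEq (by simpa using hEself z hz 0)
  have hGq : G q = G z := (hGG q hqD z hzE (hDK z hz)).antisymm (hGG z hz q hqE (hDK q hqD))
  -- a boundary point of `G z = G q` lies on the orbits of both `z` and `q`, or in `K`
  have hclo : ∀ w ∈ closure (G z), w ∉ K → w ∈ G z := by
    intro w hw hwK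
    by_cases hwz : w ∈ range fun t => φ t z
    · rw [← hGq] at hw ⊢
      refine mem_of_closure_comp (hFo q hqD) hw ?_
      rintro (hk | ⟨t, e⟩)
      · exact hwK hk
      · obtain ⟨s, rfl⟩ := hwz
        refine hqK (Or.inr ⟨-t + s, ?_⟩)
        simp only at e ⊢
        rw [φ.map_add, ← e, flow_neg]
    · exact mem_of_closure_comp (hFo z hz) hw fun hk => hk.elim hwK hwz
  have hjoin : JoinedIn Kᶜ p z := haD.trans (JoinedIn.mono hz (compl_subset_compl.2 subset_union_left))
  have hsub : pathComponentIn Kᶜ p ⊆ G z := by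
    refine (isPathConnected_pathComponentIn hp).isConnected.isPreconnected.subset_of_closure_inter_subset
      ((hFo z hz).pathComponentIn p)
      ⟨p, mem_pathComponentIn_self hp, mem_pathComponentIn_self (hpF z hz)⟩ ?_
    rintro w ⟨hw1, hw2⟩
    exact hclo w hw1 (pathComponentIn_subset hw2)
  have : z ∈ F z := pathComponentIn_subset (hsub hjoin)
  exact hself z 0 (by simpa using this)

end Glob


/-! ### The complement of `K` is connected and its attracted part is open -/

namespace Glob

variable {φ : Flow ℝ (ℝ × ℝ)} {K : Set (ℝ × ℝ)}

/-- A bounded component of the complement of `K` would consist of homoclinic points. -/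
theorem compl_joined (h : Glob φ K) {a b : ℝ × ℝ} (ha : a ∉ K) (hb : b ∉ K) :
    JoinedIn Kᶜ a b := by
  by_contra hno
  have key : ∀ c, c ∉ K → ¬ Bornology.IsBounded (pathComponentIn Kᶜ c) := by
    intro c hc hbd
    obtain ⟨h1, h2⟩ := h.homoclinic_of_bounded hc hbd.isCompact_closure fun t =>
      subset_closure (comp_inv (φ := φ) (F := Kᶜ) (fun z hz t => h.notK_inv t hz) (mem_pathComponentIn_self hc) t)
    exact h.no_homoclinic hc h1 h2
  rcases bounded_or h.cpt hno with h1 | h1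
  · exact key a ha h1
  · exact key b hb h1

theorem not_both (h : Glob φ K) {x : ℝ × ℝ} (hx : x ∉ K) (hA : x ∈ Aset φ K) : x ∉ Rset φ K :=
  fun hR => h.no_homoclinic hx hA hR

theorem neg_far (h : Glob φ K) {x : ℝ × ℝ} (hx : x ∉ K) (hA : x ∈ Aset φ K) :
    ∃ δ > 0, ∀ t ≤ 0, δ < Metric.infDist (φ t x) K := by
  obtain ⟨T, hT⟩ := h.escape_bot hx hA (h.not_both hx hA) (h.cpt_nhd 1)
  obtain ⟨δ, hδ, hd⟩ := h.sep_cpt (isCompact_Icc.image (flow_cont φ x) (s := Icc T 0)) (by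
    rintro _ ⟨t, _, rfl⟩; exact h.notK_inv t hx)
  refine ⟨min δ 1, lt_min hδ one_pos, fun t ht => ?_⟩
  rcases le_or_gt t T with h1 | h1
  · exact (min_le_right _ _).trans_lt (not_le.1 (hT t h1))
  · exact (min_le_left _ _).trans_lt (hd _ ⟨t, ⟨h1.le, ht⟩, rfl⟩)

theorem pos_bdd (h : Glob φ K) {x : ℝ × ℝ} (hA : x ∈ Aset φ K) :
    ∃ ρ, ∀ t ≥ 0, ‖φ t x‖ ≤ ρ := by
  obtain ⟨T, hT⟩ := h.tail_A hA one_pos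
  obtain ⟨ρ, hρ⟩ := ((h.cpt_nhd 1).union
    (isCompact_Icc.image (flow_cont φ x) (s := Icc 0 T))).isBounded.exists_norm_le
  refine ⟨ρ, fun t ht => hρ _ ?_⟩
  rcases le_or_gt T t with h1 | h1
  · exact Or.inl (hT t h1).le
  · exact Or.inr ⟨t, ⟨ht, h1.le⟩, rfl⟩

theorem pos_far (h : Glob φ K) {x : ℝ × ℝ} (hx : x ∉ K) (hR : x ∈ Rset φ K) :
    ∃ δ > 0, ∀ t ≥ 0, δ < Metric.infDist (φ t x) K := by
  obtain ⟨δ, hδ, hd⟩ := h.reverse.neg_far hx (by rwa [Aset_reverse])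
  refine ⟨δ, hδ, fun t ht => ?_⟩
  simpa [Flow.reverse_apply] using hd (-t) (by linarith)

theorem neg_bdd (h : Glob φ K) {x : ℝ × ℝ} (hR : x ∈ Rset φ K) :
    ∃ ρ, ∀ t ≤ 0, ‖φ t x‖ ≤ ρ := by
  obtain ⟨ρ, hd⟩ := h.reverse.pos_bdd (x := x) (by rwa [Aset_reverse])
  refine ⟨ρ, fun t ht => ?_⟩
  simpa [Flow.reverse_apply] using hd (-t) (by linarith)

/-- The times at which an attracted orbit meets a compact set away from `K` form a compact set. -/
theorem times_A (h : Glob φ K) {x : ℝ × ℝ} (hx : x ∉ K) (hA : x ∈ Aset φ K) {C : Set (ℝ × ℝ)}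
    (hC : IsCompact C) (hCK : ∀ z ∈ C, z ∉ K) : IsCompact {t | φ t x ∈ C} := by
  obtain ⟨T, hT⟩ := h.escape_bot hx hA (h.not_both hx hA) hC
  obtain ⟨δ, hδ, hd⟩ := h.sep_cpt hC hCK
  obtain ⟨T', hT'⟩ := h.tail_A hA hδ
  refine (isCompact_Icc (a := T) (b := T')).of_isClosed_subset
    (hC.isClosed.preimage (flow_cont φ x)) fun t ht => ⟨?_, ?_⟩
  · by_contra hlt
    exact hT t (not_le.1 hlt).le ht
  · by_contra hlt
    exact lt_asymm (hT' t (not_le.1 hlt).le) (hd _ ht)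

theorem times_R (h : Glob φ K) {x : ℝ × ℝ} (hx : x ∉ K) (hR : x ∈ Rset φ K) {C : Set (ℝ × ℝ)}
    (hC : IsCompact C) (hCK : ∀ z ∈ C, z ∉ K) : IsCompact {t | φ t x ∈ C} := by
  have := (h.reverse.times_A hx (by rwa [Aset_reverse]) hC hCK).image continuous_neg
  convert this using 1
  ext t
  simp [Flow.reverse_apply]

/-- An orbit through `u` going from infinity to `K` and one through `v` going from `K` to infinity
cannot pass close to each other: the ends near `K` close up through a neighborhood of `K`, the
other ends through a neighborhood of infinity, and the two arcs obtained would cross. -/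
theorem A_open (h : Glob φ K) : IsOpen (Aset φ K \ K) := by
  rw [isOpen_iff_mem_nhds]
  rintro x ⟨hA, hx⟩
  by_contra hno
  obtain ⟨O, hO, hxO, cross⟩ := flow_crossing φ (h.inj hx)
  obtain ⟨r, hr, hball⟩ := Metric.nhds_basis_closedBall.mem_iff.1
    (inter_mem (hO.mem_nhds hxO) (h.cpt.isClosed.isOpen_compl.mem_nhds hx))
  obtain ⟨z, hzB, hz⟩ : ∃ z ∈ Metric.closedBall x r, z ∉ Aset φ K \ K := by
    by_contra hno'
    push Not at hno'
    exact hno (mem_of_superset (Metric.closedBall_mem_nhds x hr) hno')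
  have hzK : z ∉ K := (hball hzB).2
  have hzA : z ∉ Aset φ K := fun h1 => hz ⟨h1, hzK⟩
  have hR : z ∈ Rset φ K := (h.glob z).resolve_left hzA
  have hne : ∀ s t, φ s x ≠ φ t z := by
    intro s t e
    have := h.A_inv (-t) (h.A_inv s hA)
    rw [e, flow_neg] at this
    exact hzA this
  set C := segment ℝ x z with hCd
  have hCB : C ⊆ Metric.closedBall x r :=
    (convex_closedBall x r).segment_subset (Metric.mem_closedBall_self hr.le) hzB
  have hCc : IsCompact C := by
    rw [hCd, segment_eq_image_lineMap]
    exact isCompact_Icc.image AffineMap.lineMap_continuous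
  have hCK : ∀ w ∈ C, w ∉ K := fun w hw => (hball (hCB hw)).2
  have c1 : Continuous fun p : ℝ × ℝ => φ p.1 x := (flow_cont φ x).comp continuous_fst
  have c2 : Continuous fun p : ℝ × ℝ => φ p.2 z := (flow_cont φ z).comp continuous_snd
  -- a closest pair of points of the two orbits on `C`, so that they miss the segment between
  obtain ⟨⟨s, t⟩, ⟨hs, ht⟩, hmin⟩ := ((h.times_A hx hA hCc hCK).prod
    (h.times_R hzK hR hCc hCK)).exists_isMinOn ⟨((0 : ℝ), (0 : ℝ)),
      by simpa using left_mem_segment ℝ x z, by simpa using right_mem_segment ℝ x z⟩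
    (c1.dist c2).continuousOn
  have hmin' : ∀ a b, φ a x ∈ C → φ b z ∈ C → dist (φ s x) (φ t z) ≤ dist (φ a x) (φ b z) :=
    fun a b ha hb => hmin (show (a, b) ∈ {t | φ t x ∈ C} ×ˢ {t | φ t z ∈ C} from ⟨ha, hb⟩)
  simp only at hs ht
  replace hs : φ s x ∈ C := hs
  replace ht : φ t z ∈ C := ht
  have huA : φ s x ∈ Aset φ K := h.A_inv s hA
  have huK : φ s x ∉ K := h.notK_inv s hx
  have hvR : φ t z ∈ Rset φ K := h.R_inv t hR
  have hvK : φ t z ∉ K := h.notK_inv t hzK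
  have huv : ∀ a b, φ a (φ s x) ≠ φ b (φ t z) := by
    intro a b
    rw [← φ.map_add, ← φ.map_add]
    exact hne _ _
  have hsegC : segment ℝ (φ s x) (φ t z) ⊆ C := (convex_segment x z).segment_subset hs ht
  have hfu : ∀ a, φ a (φ s x) ∈ segment ℝ (φ s x) (φ t z) → a = 0 := by
    intro a ha
    have haC := hsegC ha
    rw [← insert_endpoints_openSegment] at ha
    rcases ha with e | e | ha
    · exact h.inj huK a 0 (by simpa using e)
    · exact absurd (by simpa using e) (huv a 0)
    · have h1 := (dist_openSegment (by simpa using huv 0 0) ha).2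
      rw [← φ.map_add] at h1 haC
      linarith [hmin' _ t haC ht]
  have hfv : ∀ a, φ a (φ t z) ∈ segment ℝ (φ s x) (φ t z) → a = 0 := by
    intro a ha
    have haC := hsegC ha
    rw [← insert_endpoints_openSegment] at ha
    rcases ha with e | e | ha
    · exact absurd (by simpa using e.symm) (huv 0 a)
    · exact h.inj hvK a 0 (by simpa using e)
    · have h1 := (dist_openSegment (by simpa using huv 0 0) ha).1
      rw [← φ.map_add, dist_comm] at h1
      rw [← φ.map_add] at haC
      linarith [hmin' s _ hs haC]
  generalize hu : φ s x = u at *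
  generalize hv : φ t z = v at *
  have huO : u ∈ O := (hball (hCB hs)).1
  have hvO : v ∈ O := (hball (hCB ht)).1
  obtain ⟨δ1, hδ1, hd1⟩ := h.neg_far huK huA
  obtain ⟨δ2, hδ2, hd2⟩ := h.pos_far hvK hvR
  obtain ⟨δ3, hδ3, hd3⟩ := h.sep_cpt hCc hCK
  obtain ⟨δ, hδ, hδ1', hδ2', hδ3', hδ4⟩ :
      ∃ δ > 0, δ ≤ δ1 ∧ δ ≤ δ2 ∧ δ ≤ δ3 ∧ δ ≤ 1 :=
    ⟨min (min δ1 δ2) (min δ3 1), by positivity, by simp, by simp, by simp, by simp⟩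
  obtain ⟨ρ1, hρ1⟩ := h.pos_bdd huA
  obtain ⟨ρ2, hρ2⟩ := h.neg_bdd hvR
  obtain ⟨ρ3, hρ3⟩ := (hCc.union (h.cpt_nhd 1)).isBounded.exists_norm_le
  obtain ⟨ρ, hρ0, hρ1', hρ2', hρ3'⟩ : ∃ ρ : ℝ, 0 ≤ ρ ∧ ρ1 ≤ ρ ∧ ρ2 ≤ ρ ∧ ρ3 ≤ ρ :=
    ⟨max (max ρ1 ρ2) (max ρ3 0), by simp, by simp, by simp, by simp⟩
  -- `T1`, `T2` bound the times at which `u`, `v` are close to infinity, `T3`, `T4` those at which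
  -- they are close to `K`
  obtain ⟨T1, hT1⟩ := h.escape_bot huK huA (h.not_both huK huA) (isCompact_closedBall 0 ρ)
  obtain ⟨T2, hT2⟩ := h.escape_top hvK hvR (fun hA' => h.not_both hvK hA' hvR)
    (isCompact_closedBall 0 ρ)
  obtain ⟨T3, hT3⟩ := h.tail_A huA hδ
  obtain ⟨T4, hT4⟩ := h.tail_R hvR hδ
  set Sc : Set (ℝ × ℝ) := ((fun t => φ t u) '' Ici 1 ∪ (fun t => φ t v) '' Iic (-1))
    ∪ {z | Metric.infDist z K < δ} with hSc
  set Sd : Set (ℝ × ℝ) := ((fun t => φ t v) '' Ici 1 ∪ (fun t => φ t u) '' Iic (-1))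
    ∪ {z | ρ < ‖z‖} with hSd
  have jc : JoinedIn Sc (φ 1 u) (φ (-1) v) := by
    have j1 : JoinedIn Sc (φ 1 u) (φ (max 1 T3) u) := joinedIn_orbit φ u fun t ht =>
      Or.inl (Or.inl ⟨t, by rw [uIcc_of_le (le_max_left _ _)] at ht; exact ht.1, rfl⟩)
    have j3 : JoinedIn Sc (φ (min (-1) T4) v) (φ (-1) v) := joinedIn_orbit φ v fun t ht =>
      Or.inl (Or.inr ⟨t, by rw [uIcc_of_le (min_le_left _ _)] at ht; exact ht.2, rfl⟩)
    have j2 : JoinedIn Sc (φ (max 1 T3) u) (φ (min (-1) T4) v) :=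
      ((h.pathConn hδ).joinedIn _ (hT3 _ (le_max_right _ _)) _
        (hT4 _ (min_le_right _ _))).mono subset_union_right
    exact (j1.trans j2).trans j3
  have jd : JoinedIn Sd (φ 1 v) (φ (-1) u) := by
    have j1 : JoinedIn Sd (φ 1 v) (φ (max 1 T2) v) := joinedIn_orbit φ v fun t ht =>
      Or.inl (Or.inl ⟨t, by rw [uIcc_of_le (le_max_left _ _)] at ht; exact ht.1, rfl⟩)
    have j3 : JoinedIn Sd (φ (min (-1) T1) u) (φ (-1) u) := joinedIn_orbit φ u fun t ht =>
      Or.inl (Or.inr ⟨t, by rw [uIcc_of_le (min_le_left _ _)] at ht; exact ht.2, rfl⟩)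
    have j2 : JoinedIn Sd (φ (max 1 T2) v) (φ (min (-1) T1) u) :=
      ((ext_conn hρ0).joinedIn _ (by simpa using hT2 _ (le_max_right 1 T2)) _
        (by simpa using hT1 _ (min_le_right (-1) T1))).mono subset_union_right
    exact (j1.trans j2).trans j3
  have uSc : ∀ a ≤ 0, φ a u ∉ Sc := by
    rintro a ha ((⟨b, hb, e⟩ | ⟨b, hb, e⟩) | hlt)
    · have := h.inj huK _ _ e; rw [mem_Ici] at hb; linarith
    · exact huv a b e.symm
    · exact lt_asymm (lt_of_lt_of_le hlt hδ1') (hd1 a ha)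
  have vSc : ∀ a ≥ 0, φ a v ∉ Sc := by
    rintro a ha ((⟨b, hb, e⟩ | ⟨b, hb, e⟩) | hlt)
    · exact huv b a e
    · have := h.inj hvK _ _ e; rw [mem_Iic] at hb; linarith
    · exact lt_asymm (lt_of_lt_of_le hlt hδ2') (hd2 a ha)
  have vSd : ∀ a ≤ 0, φ a v ∉ Sd := by
    rintro a ha ((⟨b, hb, e⟩ | ⟨b, hb, e⟩) | hlt)
    · have := h.inj hvK _ _ e; rw [mem_Ici] at hb; linarith
    · exact huv b a e
    · exact absurd hlt (not_lt.2 ((hρ2 a ha).trans hρ2'))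
  have uSd : ∀ a ≥ 0, φ a u ∉ Sd := by
    rintro a ha ((⟨b, hb, e⟩ | ⟨b, hb, e⟩) | hlt)
    · exact huv a b e.symm
    · have := h.inj huK _ _ e; rw [mem_Iic] at hb; linarith
    · exact absurd hlt (not_lt.2 ((hρ1 a ha).trans hρ1'))
  have kSd : ∀ w, Metric.infDist w K < δ → w ∉ Sd := by
    rintro w hw ((⟨b, hb, rfl⟩ | ⟨b, hb, rfl⟩) | hlt)
    · rw [mem_Ici] at hb
      exact lt_asymm (lt_of_lt_of_le hw hδ2') (hd2 b (by linarith))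
    · rw [mem_Iic] at hb
      exact lt_asymm (lt_of_lt_of_le hw hδ1') (hd1 b (by linarith))
    · exact absurd hlt (not_lt.2 ((hρ3 w (Or.inr (hw.le.trans hδ4))).trans hρ3'))
  refine cross u huO v hvO Sc Sd jc jd ?_ (fun a _ b _ => huv a b) (fun a ha => uSc a ha.2)
    (fun a ha => vSc a ha.1) ?_ (fun a ha => vSd a ha.2) (fun a ha => uSd a ha.1) ?_
  · rw [Set.disjoint_left]
    rintro _ ((⟨b, hb, rfl⟩ | ⟨b, hb, rfl⟩) | hlt)
    · rw [mem_Ici] at hb; exact uSd b (by linarith)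
    · rw [mem_Iic] at hb; exact vSd b (by linarith)
    · exact kSd _ hlt
  · rw [Set.disjoint_left]
    rintro w hw ((⟨b, hb, rfl⟩ | ⟨b, hb, rfl⟩) | hlt)
    · rw [mem_Ici] at hb; linarith [hfu b hw]
    · rw [mem_Iic] at hb; linarith [hfv b hw]
    · exact lt_asymm (lt_of_lt_of_le hlt hδ3') (hd3 w (hsegC hw))
  · rw [Set.disjoint_left]
    rintro w hw ((⟨b, hb, rfl⟩ | ⟨b, hb, rfl⟩) | hlt)
    · rw [mem_Ici] at hb; linarith [hfv b hw]
    · rw [mem_Iic] at hb; linarith [hfu b hw]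
    · exact absurd hlt (not_lt.2 ((hρ3 w (Or.inl (hsegC hw))).trans hρ3'))

end Glob


/-! ### Stability -/

namespace Glob

variable {φ : Flow ℝ (ℝ × ℝ)} {K : Set (ℝ × ℝ)}

theorem R_open (h : Glob φ K) : IsOpen (Rset φ K \ K) := by
  have := h.reverse.A_open
  rwa [Aset_reverse] at this

/-- The connected complement of `K` is the disjoint union of two open sets, its attracted and its
repelled part. -/
theorem dichotomy (h : Glob φ K) : Rset φ K ⊆ K ∨ Aset φ K ⊆ K := by
  by_contra hno
  rw [not_or, not_subset, not_subset] at hno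
  obtain ⟨⟨a, haR, haK⟩, b, hbA, hbK⟩ := hno
  have hsub : pathComponentIn Kᶜ a ⊆ Rset φ K \ K := by
    refine (isPathConnected_pathComponentIn haK).isConnected.isPreconnected.subset_left_of_subset_union
      h.R_open h.A_open ?_ ?_ ⟨a, mem_pathComponentIn_self haK, haR, haK⟩
    · rw [Set.disjoint_left]
      rintro w ⟨hw, hwK⟩ ⟨hw', -⟩
      exact h.not_both hwK hw' hw
    · intro w hw
      have hwK : w ∉ K := pathComponentIn_subset hw
      exact (h.glob w).elim (fun h1 => Or.inr ⟨h1, hwK⟩) fun h1 => Or.inl ⟨h1, hwK⟩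
  exact h.not_both hbK hbA (hsub (h.compl_joined haK hbK)).1

/-- If `K` repels no point of its complement then it is stable: otherwise orbits starting
arbitrarily close to `K` and reaching a fixed distance from it would accumulate at a point
repelled by `K`. -/
theorem stable (h : Glob φ K) (hR : Rset φ K ⊆ K) : IsStable φ K ∧ Aset φ K = univ := by
  have hA : Aset φ K = univ := by
    rw [eq_univ_iff_forall]
    exact fun x => (h.glob x).elim id fun h1 => h.K_sub_A (hR h1)
  refine ⟨fun U hU => ?_, hA⟩
  obtain ⟨δ1, hδ1, hd1⟩ := h.exists_nhd isOpen_interior hU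
  obtain ⟨δ0, hδ0, hiso0⟩ := h.iso
  obtain ⟨δ, hδ, hδ01, hδ11⟩ : ∃ δ > 0, δ ≤ δ0 ∧ δ < δ1 :=
    ⟨min δ0 (δ1 / 2), by positivity, min_le_left _ _,
      (min_le_right _ _).trans_lt (half_lt_self hδ1)⟩
  have hiso : ∀ z, (∀ t, Metric.infDist (φ t z) K ≤ δ) → z ∈ K := fun z hz =>
    hiso0 z fun t => (hz t).trans hδ01
  have key : ∃ η > 0, ∀ z, Metric.infDist z K < η → ∀ t ≥ 0, Metric.infDist (φ t z) K ≤ δ := by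
    by_contra hno
    push Not at hno
    have hstep : ∀ n : ℕ, ∃ z : ℝ × ℝ, ∃ s : ℝ, 0 ≤ s ∧
        Metric.infDist z K ≤ δ * (1 / ((n : ℝ) + 1)) ∧ Metric.infDist (φ s z) K = δ ∧
        ∀ r ∈ Icc 0 s, Metric.infDist (φ r z) K ≤ δ := by
      intro n
      have hn : 0 < 1 / ((n : ℝ) + 1) := Nat.one_div_pos_of_nat
      have hn1 : 1 / ((n : ℝ) + 1) ≤ 1 := by
        rw [div_le_one (by positivity)]; linarith [(Nat.cast_nonneg n : (0 : ℝ) ≤ n)]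
      obtain ⟨z, hz, t, ht, hlt⟩ := hno _ (mul_pos hδ hn)
      obtain ⟨s, hs, e, hst⟩ := first_exit (δ := δ) (cont_dist (φ := φ) (K := K) z) ht (by
        simp only [φ.map_zero_apply]
        exact hz.le.trans (mul_le_of_le_one_right hδ.le hn1)) hlt.le
      exact ⟨z, s, hs.1, hz.le, e, hst⟩
    choose z s hs0 hz hsδ hst using hstep
    have hκ0 : Tendsto (fun n : ℕ => δ * (1 / ((n : ℝ) + 1))) atTop (𝓝 0) := by
      simpa using tendsto_one_div_add_atTop_nhds_zero_nat.const_mul δ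
    obtain ⟨y, -, θ, hθ, hlim⟩ := (h.cpt_nhd δ).tendsto_subseq
      (x := fun n => φ (s n) (z n)) fun n => (hsδ n).le
    have hyδ : Metric.infDist y K = δ := by
      refine tendsto_nhds_unique (((Metric.continuous_infDist_pt K).tendsto y).comp hlim) ?_
      refine tendsto_const_nhds.congr fun n => ?_
      exact (hsδ _).symm
    have hyK : y ∉ K := fun hk => by rw [h.dist_zero.2 hk] at hyδ; exact hδ.ne hyδ
    refine hyK (hR (h.exit_limit hiso (x := fun n => z (θ n)) (s := fun n => s (θ n))
      (fun n => hs0 _) ?_ (fun n => hst _) hlim hyK).2)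
    exact squeeze_zero (fun n => Metric.infDist_nonneg) (fun n => hz (θ n))
      (hκ0.comp hθ.tendsto_atTop)
  obtain ⟨η, hη, hkey⟩ := key
  refine ⟨{x | ∀ t ≥ 0, Metric.infDist (φ t x) K ≤ δ}, ?_, ?_, ?_⟩
  · intro k hk
    refine mem_interior_iff_mem_nhds.2 (mem_of_superset ((isOpen_lt
      (Metric.continuous_infDist_pt K) continuous_const).mem_nhds (?_ : Metric.infDist k K < η))
      fun z hz => hkey z hz)
    rw [h.dist_zero.2 hk]; exact hη
  · intro x hx
    refine interior_subset (hd1 x (lt_of_le_of_lt ?_ hδ11))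
    simpa using hx 0 le_rfl
  · intro x hx t ht r hr
    rw [← φ.map_add]
    exact hx _ (by linarith)

theorem neg_stable (h : Glob φ K) (hA : Aset φ K ⊆ K) : IsNegStable φ K ∧ Rset φ K = univ := by
  obtain ⟨h1, h2⟩ := h.reverse.stable (by rwa [Rset_reverse])
  rw [Aset_reverse] at h2
  refine ⟨fun U hU => ?_, h2⟩
  obtain ⟨V, hV, hVU, hs⟩ := h1 U hU
  refine ⟨V, hV, hVU, fun x hx t ht => ?_⟩
  simpa [Flow.reverse_apply] using hs x hx (-t) (by linarith)

end Glob

theorem glob_of_isolated {φ : Flow ℝ (ℝ × ℝ)} {K : Set (ℝ × ℝ)} (hIso : IsIsolatedInv φ K)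
    (hConn : IsConnected K) (hGlob : Iset φ K = Set.univ) : Glob φ K := by
  obtain ⟨hc, hi, N, hN, hKN, hmax⟩ := hIso
  refine ⟨hc, hi, hConn, fun x => ?_, ?_⟩
  · have : x ∈ Iset φ K := by rw [hGlob]; trivial
    exact this
  · obtain ⟨δ, hδ, hs⟩ := hc.exists_thickening_subset_open isOpen_interior hKN
    have hin : ∀ z, Metric.infDist z K ≤ δ / 2 → z ∈ N := fun z hz => interior_subset
      (hs ((Metric.mem_thickening_iff_infDist_lt hConn.nonempty).2
        (hz.trans_lt (half_lt_self hδ))))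
    refine ⟨δ / 2, half_pos hδ, fun x hx => hmax x ?_ fun t => hin _ (hx t)⟩
    simpa using hin _ (hx 0)

theorem not_saddle_of_stable {φ : Flow ℝ (ℝ × ℝ)} {K : Set (ℝ × ℝ)} (hS : IsStable φ K) :
    ¬ Saddle φ K := by
  rintro ⟨U, hU, hs⟩
  obtain ⟨V, hV, hVU, hinv⟩ := hS U hU
  obtain ⟨x, hx, hpos, -⟩ := hs V hV
  refine hpos ?_
  rintro _ ⟨t, ht, rfl⟩
  exact hVU (hinv x hx t ht)

theorem not_saddle_of_negStable {φ : Flow ℝ (ℝ × ℝ)} {K : Set (ℝ × ℝ)} (hS : IsNegStable φ K) :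
    ¬ Saddle φ K := by
  rintro ⟨U, hU, hs⟩
  obtain ⟨V, hV, hVU, hinv⟩ := hS U hU
  obtain ⟨x, hx, -, hneg⟩ := hs V hV
  refine hneg ?_
  rintro _ ⟨t, ht, rfl⟩
  exact hVU (hinv x hx t ht)


/-- an isolated invariant continuum of a planar flow whose region of
influence is all of `ℝ²` is non-saddle, and is a stable global attractor or a
negatively stable global repeller. -/
theorem stmt19 (φ : Flow ℝ (ℝ × ℝ)) (K : Set (ℝ × ℝ))
    (hIso : IsIsolatedInv φ K) (hConn : IsConnected K)
    (hGlob : Iset φ K = Set.univ) :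
    ¬ Saddle φ K ∧
      ((IsStable φ K ∧ Aset φ K = Set.univ) ∨
        (IsNegStable φ K ∧ Rset φ K = Set.univ)) := by
  have h := glob_of_isolated hIso hConn hGlob
  rcases h.dichotomy with hR | hA
  · have hs := h.stable hR
    exact ⟨not_saddle_of_stable hs.1, Or.inl hs⟩
  · have hs := h.neg_stable hA
    exact ⟨not_saddle_of_negStable hs.1, Or.inr hs⟩
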